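/- arXiv:1506.08071 — 9 statements merged into one kernel-verified Lean document; each statement's English description precedes it below -/
import Mathlib

section
/- Under the action of SL_*^1(2,A_n) on column vectors M_{2×1}(A_n) by left multiplication, the orbit of (1,0)^T equals O₁ ∪ O₂, where O₁ = {(a, ua)^T : a ∈ A_n^×, u ∈ A_n^asym} and O₂ = {(uc, c)^T : c ∈ A_n^×, u ∈ A_n^asym and u not a unit}; in particular this orbit has cardinality (q²−1)·q^{3n−3}·(q+1). -/
open Polynomial Matrix

noncomputable section

abbrev TruncPoly (K : Type) [CommRing K] (n : ℕ) := AdjoinRoot (X ^ n : K[X])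

def trStar (K : Type) [CommRing K] (σ : K →+* K) (n : ℕ) :
    TruncPoly K n →+* TruncPoly K n :=
  AdjoinRoot.lift ((AdjoinRoot.of _).comp σ) (-(AdjoinRoot.root _)) (by
    have h : (AdjoinRoot.root (X ^ n : K[X])) ^ n = 0 := by
      rw [← AdjoinRoot.mk_X, ← map_pow, AdjoinRoot.mk_self]
    rw [eval₂_pow, eval₂_X, neg_pow, h, mul_zero])

/-- The matrix `J = [[0,1],[1,0]]`. -/
def jMat (A : Type) [CommRing A] : Matrix (Fin 2) (Fin 2) A := !![0, 1; 1, 0]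

/-- The involution `g ↦ g*` on 2×2 matrices: `(g*)_{ij} = (g_{ji})*`. -/
def mStar (A : Type) [CommRing A] (st : A →+* A) (g : Matrix (Fin 2) (Fin 2) A) :
    Matrix (Fin 2) (Fin 2) A := (g.map st)ᵀ

/-- The group `SL_*^1(2,A)` (as a set of matrices): `g* J g = J`. -/
def SLstarSet (A : Type) [CommRing A] (st : A →+* A) : Set (Matrix (Fin 2) (Fin 2) A) :=
  {g | mStar A st g * jMat A * g = jMat A}

theorem aux_asym_card {A : Type} [CommRing A] [Finite A] (s : A →+* A) (hs : ∀ a, s (s a) = a)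
    (d : A) (hd : IsUnit d) (hsd : s d = -d) (h2 : IsUnit (2 : A)) :
    {u : A | s u = -u}.ncard * {u : A | s u = -u}.ncard = Nat.card A := by
  obtain ⟨e, he⟩ := hd.exists_left_inv
  obtain ⟨h, hh⟩ := h2.exists_left_inv
  have hse : s e = -e := by
    have h1 : s e * s d = 1 := by rw [← map_mul, he, map_one]
    rw [hsd] at h1
    linear_combination (-e) * h1 + (-s e) * he
  have hsh : s h = h := by
    have h1 : s h * s 2 = 1 := by rw [← map_mul, hh, map_one]
    rw [map_ofNat] at h1
    linear_combination h * h1 - (s h) * hh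
  rw [← Set.ncard_prod, ← Set.ncard_univ]
  refine Set.ncard_congr (fun x _ => x.1 + d * x.2) (fun _ _ => Set.mem_univ _) ?_ ?_
  · rintro ⟨u, v⟩ ⟨u', v'⟩ ⟨hu, hv⟩ ⟨hu', hv'⟩ hE
    simp only [Set.mem_ofPred_eq] at hu hv hu' hv' hE
    have hE2 := congrArg s hE
    simp only [map_add, map_mul, hu, hv, hu', hv', hsd] at hE2
    have e1 : u = u' := by
      linear_combination h * hE - h * hE2 - (u - u') * hh
    have e2 : v = v' := by
      subst e1
      linear_combination e * hE - (v - v') * he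
    rw [e1, e2]
  · intro r _
    refine ⟨(h * (r - s r), e * h * (r + s r)), ⟨?_, ?_⟩, ?_⟩
    · simp only [Set.mem_ofPred_eq, map_mul, map_sub, hs, hsh]; ring
    · simp only [Set.mem_ofPred_eq, map_mul, map_add, hs, hsh, hse]; ring
    · linear_combination (h * (r + s r)) * he + r * hh

theorem aux_fib_card {A B : Type} [CommRing A] [CommRing B] [Finite A] (ε : A →+* B) (ι : B →+* A)
    (h : ∀ b, ε (ι b) = b) (T : Set A) (T' : Set B) (h1 : ∀ b ∈ T', ι b ∈ T)
    (h2 : ∀ a ∈ T, ε a ∈ T') (ha : ∀ a ∈ T, ∀ b ∈ T, a + b ∈ T) (hb : ∀ a ∈ T, ∀ b ∈ T, a - b ∈ T) :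
    {a ∈ T | ε a = 0}.ncard * T'.ncard = T.ncard := by
  rw [← Set.ncard_prod]
  refine Set.ncard_congr (fun x _ => x.1 + ι x.2) ?_ ?_ ?_
  · rintro ⟨a, b⟩ ⟨hA, hB⟩
    exact ha _ hA.1 _ (h1 _ hB)
  · rintro ⟨a, b⟩ ⟨a', b'⟩ ⟨hA, hB⟩ ⟨hA', hB'⟩ hE
    have hE2 := congrArg ε hE
    have q1 := hA.2
    have q2 := hA'.2
    simp only [map_add, h] at hE2
    simp only at q1 q2 hE
    rw [q1, q2, zero_add, zero_add] at hE2
    subst hE2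
    rw [add_right_cancel hE]
  · intro a hA
    refine ⟨(a - ι (ε a), ε a), ⟨⟨hb _ hA _ (h1 _ (h2 _ hA)), ?_⟩, h2 _ hA⟩, ?_⟩
    · simp [h]
    · simp

theorem aux_orbit {A : Type} [CommRing A] [IsLocalRing A] (s : A →+* A) (hs : ∀ a, s (s a) = a) :
    {v : Fin 2 → A | ∃ g ∈ SLstarSet A s, v = g.mulVec ![1, 0]} =
      {v : Fin 2 → A | ∃ a u : A, IsUnit a ∧ s u = -u ∧ v = ![a, u * a]} ∪
      {v : Fin 2 → A | ∃ c u : A, IsUnit c ∧ s u = -u ∧ ¬ IsUnit u ∧ v = ![u * c, c]} := by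
  have key : ∀ a b c d : A, (!![a, b; c, d] ∈ SLstarSet A s) ↔
      (s c * a + s a * c = 0 ∧ s c * b + s a * d = 1) ∧
      (s d * a + s b * c = 1 ∧ s d * b + s b * d = 0) := by
    intro a b c d
    simp only [SLstarSet, mStar, jMat, Set.mem_ofPred_eq]
    rw [← Matrix.ext_iff]
    simp [Fin.forall_fin_two, Matrix.mul_apply, Fin.sum_univ_two]
  have mv : ∀ a b c d : A, (!![a, b; c, d]).mulVec ![1, 0] = ![a, c] := by
    intro a b c d
    ext i
    fin_cases i <;> simp [Matrix.mulVec, dotProduct, Fin.sum_univ_two]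
  have anti : ∀ a c : A, IsUnit a → s c * a + s a * c = 0 → ∃ u, s u = -u ∧ c = u * a := by
    intro a c ha h
    obtain ⟨e, he⟩ := ha.exists_left_inv
    have h1 : s e * s a = 1 := by rw [← map_mul, he, map_one]
    refine ⟨c * e, ?_, by linear_combination (-c) * he⟩
    rw [map_mul]
    linear_combination (s e * e) * h - (s c * s e) * he - (c * e) * h1
  ext v
  constructor
  · rintro ⟨g, hg, rfl⟩
    rw [Matrix.eta_fin_two g] at hg ⊢
    rw [mv]
    obtain ⟨⟨h1, h2⟩, -⟩ := (key _ _ _ _).1 hg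
    generalize g 0 0 = a at *
    generalize g 0 1 = b at *
    generalize g 1 0 = c at *
    generalize g 1 1 = d at *
    by_cases ha : IsUnit a
    · left
      obtain ⟨u, hu, hc⟩ := anti a c ha h1
      exact ⟨a, u, ha, hu, by rw [hc]⟩
    · right
      have hc : IsUnit c := by
        have hsa : ¬ IsUnit (s a * d) := fun h => ha (by
          have := (isUnit_of_mul_isUnit_left h).map s
          rwa [hs] at this)
        have h3 := (IsLocalRing.isUnit_or_isUnit_of_add_one h2).resolve_right hsa
        have := (isUnit_of_mul_isUnit_left h3).map s
        rwa [hs] at this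
      obtain ⟨u, hu, hc'⟩ := anti c a hc (by linear_combination h1)
      refine ⟨c, u, hc, hu, fun h => ha (by rw [hc']; exact h.mul hc), by rw [hc']⟩
  · rintro (⟨a, u, ha, hu, rfl⟩ | ⟨a, u, ha, hu, -, rfl⟩)
    all_goals
      obtain ⟨e, he⟩ := ha.exists_left_inv
      have h1 : s e * s a = 1 := by rw [← map_mul, he, map_one]
    · refine ⟨!![a, 0; u * a, s e], (key _ _ _ _).2 ⟨⟨?_, ?_⟩, ?_, ?_⟩, (mv _ _ _ _).symm⟩
      · rw [map_mul, hu]; ring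
      · linear_combination h1
      · rw [hs, map_zero]; linear_combination he
      · simp
    · refine ⟨!![u * a, s e; a, 0], (key _ _ _ _).2 ⟨⟨?_, ?_⟩, ?_, ?_⟩, (mv _ _ _ _).symm⟩
      · rw [map_mul, hu]; ring
      · linear_combination h1
      · rw [hs, map_zero]; linear_combination he
      · simp

theorem aux_union {A : Type} [CommRing A] [Finite A] (s : A →+* A) :
    ({v : Fin 2 → A | ∃ a u : A, IsUnit a ∧ s u = -u ∧ v = ![a, u * a]} ∪
      {v : Fin 2 → A | ∃ c u : A, IsUnit c ∧ s u = -u ∧ ¬ IsUnit u ∧ v = ![u * c, c]}).ncard =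
    {a : A | IsUnit a}.ncard * {u : A | s u = -u}.ncard +
    {a : A | IsUnit a}.ncard * {u : A | s u = -u ∧ ¬ IsUnit u}.ncard := by
  rw [Set.ncard_union_eq]
  · congr 1
    · rw [← Set.ncard_prod]
      symm
      refine Set.ncard_congr (fun x _ => ![x.1, x.2 * x.1]) ?_ ?_ ?_
      · rintro ⟨a, u⟩ ⟨ha, hu⟩
        exact ⟨a, u, ha, hu, rfl⟩
      · rintro ⟨a, u⟩ ⟨a', u'⟩ ⟨ha, hu⟩ ⟨ha', hu'⟩ hE
        have e0 : a = a' := congrFun hE 0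
        have e1 : u * a = u' * a' := congrFun hE 1
        subst e0
        rw [IsUnit.mul_right_cancel ha e1]
      · rintro v ⟨a, u, ha, hu, rfl⟩
        exact ⟨(a, u), ⟨ha, hu⟩, rfl⟩
    · rw [← Set.ncard_prod]
      symm
      refine Set.ncard_congr (fun x _ => ![x.2 * x.1, x.1]) ?_ ?_ ?_
      · rintro ⟨a, u⟩ ⟨ha, hu, hu2⟩
        exact ⟨a, u, ha, hu, hu2, rfl⟩
      · rintro ⟨a, u⟩ ⟨a', u'⟩ ⟨ha, hu⟩ ⟨ha', hu'⟩ hE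
        have e0 : a = a' := congrFun hE 1
        have e1 : u * a = u' * a' := congrFun hE 0
        subst e0
        rw [IsUnit.mul_right_cancel ha e1]
      · rintro v ⟨a, u, ha, hu, hu2, rfl⟩
        exact ⟨(a, u), ⟨ha, hu, hu2⟩, rfl⟩
  · rw [Set.disjoint_left]
    rintro v ⟨a, u, ha, hu, rfl⟩ ⟨c, w, hc, hw, hw2, hE⟩
    have e0 : a = w * c := congrFun hE 0
    rw [e0] at ha
    exact hw2 (isUnit_of_mul_isUnit_left ha)

def trEps (K : Type) [CommRing K] (n : ℕ) (hn : 0 < n) : TruncPoly K n →+* K :=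
  AdjoinRoot.lift (RingHom.id K) 0 (by simp [hn.ne'])

theorem trEps_of (K : Type) [CommRing K] (n : ℕ) (hn : 0 < n) (z : K) :
    trEps K n hn (AdjoinRoot.of _ z) = z := by
  simp [trEps]

theorem trEps_root (K : Type) [CommRing K] (n : ℕ) (hn : 0 < n) :
    trEps K n hn (AdjoinRoot.root _) = 0 := by
  simp [trEps]

theorem trStar_of (K : Type) [CommRing K] (σ : K →+* K) (n : ℕ) (z : K) :
    trStar K σ n (AdjoinRoot.of _ z) = AdjoinRoot.of _ (σ z) := by
  simp [trStar]

theorem trStar_root (K : Type) [CommRing K] (σ : K →+* K) (n : ℕ) :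
    trStar K σ n (AdjoinRoot.root _) = -AdjoinRoot.root _ := by
  simp [trStar]

theorem aux_ext {K B : Type} [CommRing K] [CommRing B] (n : ℕ) (f g : TruncPoly K n →+* B)
    (h1 : ∀ z, f (AdjoinRoot.of _ z) = g (AdjoinRoot.of _ z))
    (h2 : f (AdjoinRoot.root _) = g (AdjoinRoot.root _)) (a : TruncPoly K n) : f a = g a := by
  have : (f.comp (AdjoinRoot.mk (X ^ n : K[X]))) = g.comp (AdjoinRoot.mk _) := by
    apply Polynomial.ringHom_ext
    · intro z
      simpa using h1 z
    · simpa using h2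
  induction a using AdjoinRoot.induction_on with
  | ih r => exact RingHom.congr_fun this r

theorem trEps_unit (K : Type) [Field K] (n : ℕ) (hn : 0 < n) (a : TruncPoly K n) :
    IsUnit a ↔ trEps K n hn a ≠ 0 := by
  constructor
  · intro h
    exact (h.map (trEps K n hn)).ne_zero
  · intro h
    induction a using AdjoinRoot.induction_on with
    | ih r =>
      rw [← Polynomial.X_mul_divX_add r] at h ⊢
      rw [map_add, map_mul, AdjoinRoot.mk_X, AdjoinRoot.mk_C] at h ⊢
      rw [map_add, map_mul, trEps_root, trEps_of, zero_mul, zero_add] at h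
      have hnil : IsNilpotent (AdjoinRoot.root (X ^ n : K[X])) :=
        ⟨n, by rw [← AdjoinRoot.mk_X, ← map_pow, AdjoinRoot.mk_self]⟩
      have hu : IsUnit (AdjoinRoot.of (X ^ n : K[X]) (r.coeff 0)) :=
        (IsUnit.mk0 _ h).map _
      exact (Commute.isNilpotent_mul_right (Commute.all _ _) hnil).isUnit_add_right_of_commute hu
        (Commute.all _ _)

theorem aux_finite (K : Type) [Field K] [Finite K] (n : ℕ) : Finite (TruncPoly K n) := by
  have : Module.Finite K (TruncPoly K n) :=
    (AdjoinRoot.powerBasis' (monic_X_pow (R := K) n)).finite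
  exact Module.finite_of_finite K

theorem aux_card (K : Type) [Field K] [Finite K] (n : ℕ) :
    Nat.card (TruncPoly K n) = Nat.card K ^ n := by
  have : Module.Finite K (TruncPoly K n) :=
    (AdjoinRoot.powerBasis' (monic_X_pow (R := K) n)).finite
  rw [Module.natCard_eq_pow_finrank (K := K),
    (AdjoinRoot.powerBasis' (monic_X_pow (R := K) n)).finrank, AdjoinRoot.powerBasis'_dim,
    natDegree_X_pow]

theorem aux_invol (q : ℕ) (k K : Type) [Field k] [Fintype k] [Field K] [Fintype K] [Algebra k K]
    (hcardk : Fintype.card k = q) (hcardK : Fintype.card K = q ^ 2)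
    (Δ : K) (hΔ : Δ ∉ Set.range (algebraMap k K))
    (σ : K →+* K) (hσk : ∀ c : k, σ (algebraMap k K c) = algebraMap k K c)
    (hσΔ : σ Δ = -Δ) (z : K) : σ (σ z) = z := by
  have hinj : Function.Injective
      (fun x : k × k => algebraMap k K x.1 + algebraMap k K x.2 * Δ) := by
    rintro ⟨a, b⟩ ⟨a', b'⟩ h
    simp only at h
    have hb : b = b' := by
      by_contra hb
      have hb' : algebraMap k K (b - b') ≠ 0 := by
        simpa [sub_eq_zero] using hb
      apply hΔ
      refine ⟨(a' - a) / (b - b'), ?_⟩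
      rw [map_div₀, div_eq_iff hb', map_sub, map_sub]
      linear_combination -h
    subst hb
    rw [(algebraMap k K).injective (add_right_cancel h)]
  have hbij := (Fintype.bijective_iff_injective_and_card _).2
    ⟨hinj, by rw [Fintype.card_prod, hcardk, hcardK, sq]⟩
  obtain ⟨⟨a, b⟩, rfl⟩ := hbij.2 z
  simp [hσk, hσΔ]

/-- the orbit of `(1,0)ᵀ` under the left-multiplication action of
`SL_*^1(2,A_n)` on column vectors equals `O₁ ∪ O₂`, and it has cardinality
`(q²−1)·q^{3n−3}·(q+1)`. -/
theorem orbit_SLstar_truncPoly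
    (p t q : ℕ) (hp : p.Prime) (hp2 : Odd p) (ht : 0 < t) (hq : q = p ^ t)
    (k K : Type) [Field k] [Fintype k] [Field K] [Fintype K] [Algebra k K]
    (hcardk : Fintype.card k = q) (hcardK : Fintype.card K = q ^ 2)
    (Δ : K) (hΔ : Δ ∉ Set.range (algebraMap k K))
    (hΔ2 : Δ ^ 2 ∈ Set.range (algebraMap k K))
    (σ : K →+* K) (hσk : ∀ c : k, σ (algebraMap k K c) = algebraMap k K c)
    (hσne : σ ≠ RingHom.id K) (hσΔ : σ Δ = -Δ)
    (n : ℕ) (hn : 0 < n) :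
    ({v : Fin 2 → TruncPoly K n |
        ∃ g ∈ SLstarSet (TruncPoly K n) (trStar K σ n), v = g.mulVec ![1, 0]} =
      {v : Fin 2 → TruncPoly K n | ∃ a u : TruncPoly K n,
          IsUnit a ∧ trStar K σ n u = -u ∧ v = ![a, u * a]} ∪
      {v : Fin 2 → TruncPoly K n | ∃ c u : TruncPoly K n,
          IsUnit c ∧ trStar K σ n u = -u ∧ ¬ IsUnit u ∧ v = ![u * c, c]}) ∧
    Nat.card {v : Fin 2 → TruncPoly K n |
        ∃ g ∈ SLstarSet (TruncPoly K n) (trStar K σ n), v = g.mulVec ![1, 0]} =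
      (q ^ 2 - 1) * q ^ (3 * n - 3) * (q + 1) := by
  have hA : Finite (TruncPoly K n) := aux_finite K n
  have hσσ := aux_invol q k K hcardk hcardK Δ hΔ σ hσk hσΔ
  have hss : ∀ a, trStar K σ n (trStar K σ n a) = a := by
    intro a
    refine aux_ext n ((trStar K σ n).comp (trStar K σ n)) (RingHom.id _) ?_ ?_ a
    · intro z; simp [trStar_of, hσσ]
    · simp [trStar_root]
  have hes : ∀ a, trEps K n hn (trStar K σ n a) = σ (trEps K n hn a) := by
    intro a
    refine aux_ext n ((trEps K n hn).comp (trStar K σ n)) (σ.comp (trEps K n hn)) ?_ ?_ a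
    · intro z; simp [trStar_of, trEps_of]
    · simp [trStar_root, trEps_root]
  have hnt : Nontrivial (TruncPoly K n) := (trEps K n hn).domain_nontrivial
  have hloc : IsLocalRing (TruncPoly K n) := by
    refine IsLocalRing.of_nonunits_add ?_
    intro a b ha hb
    rw [mem_nonunits_iff, trEps_unit K n hn, not_not] at *
    rw [map_add, ha, hb, add_zero]
  have horb := aux_orbit (trStar K σ n) hss
  refine ⟨horb, ?_⟩
  rw [horb, Nat.card_coe_set_eq, aux_union]
  have hq0 : 0 < q := by rw [hq]; exact pow_pos hp.pos _
  have hqodd : Odd q := by rw [hq]; exact hp2.pow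
  have hΔ0 : Δ ≠ 0 := by
    rintro rfl
    exact hΔ ⟨0, map_zero _⟩
  have h2 : (2 : K) ≠ 0 := by
    intro h
    have hd : Odd (Fintype.card K) := by rw [hcardK]; exact hqodd.pow
    have h3 : ((Fintype.card K : ℕ) : K) = 0 := Nat.cast_card_eq_zero K
    obtain ⟨m, hm⟩ := hd
    rw [hm] at h3
    push_cast at h3
    rw [h] at h3
    simp at h3
  have hcK : Nat.card K = q ^ 2 := by rw [Nat.card_eq_fintype_card, hcardK]
  have hcA : Nat.card (TruncPoly K n) = (q ^ 2) ^ n := by rw [aux_card, hcK]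
  have c1 := aux_asym_card σ hσσ Δ (IsUnit.mk0 _ hΔ0) hσΔ (IsUnit.mk0 _ h2)
  have c2 := aux_asym_card (trStar K σ n) hss (AdjoinRoot.of _ Δ)
    ((IsUnit.mk0 _ hΔ0).map _) (by rw [trStar_of, hσΔ, map_neg])
    (by have := (IsUnit.mk0 _ h2).map (AdjoinRoot.of (X ^ n : K[X])); rwa [map_ofNat] at this)
  rw [hcK, ← sq] at c1
  rw [hcA, ← sq, ← pow_mul, mul_comm 2 n, pow_mul] at c2
  have d1 := Nat.pow_left_injective two_ne_zero c1
  have d2 := Nat.pow_left_injective two_ne_zero c2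
  have c3 := aux_fib_card (trEps K n hn) (AdjoinRoot.of _) (trEps_of K n hn)
    {u | trStar K σ n u = -u} {u | σ u = -u}
    (by intro b hb
        simp only [Set.mem_ofPred_eq] at *
        rw [trStar_of, hb, map_neg])
    (by intro a ha
        simp only [Set.mem_ofPred_eq] at *
        rw [← hes, ha, map_neg])
    (by intro a ha b hb
        simp only [Set.mem_ofPred_eq] at *
        rw [map_add, ha, hb]; ring)
    (by intro a ha b hb
        simp only [Set.mem_ofPred_eq] at *
        rw [map_sub, ha, hb]; ring)
  have c4 := aux_fib_card (trEps K n hn) (AdjoinRoot.of _) (trEps_of K n hn)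
    Set.univ Set.univ (by simp) (by simp) (by simp) (by simp)
  have e3 : {u : TruncPoly K n | trStar K σ n u = -u ∧ ¬ IsUnit u} =
      {a ∈ {u : TruncPoly K n | trStar K σ n u = -u} | trEps K n hn a = 0} := by
    ext u
    simp [trEps_unit K n hn]
  have e4 : {u : TruncPoly K n | IsUnit u} =
      {a ∈ (Set.univ : Set (TruncPoly K n)) | trEps K n hn a = 0}ᶜ := by
    ext u
    simp [trEps_unit K n hn]
  have c5 := Set.ncard_add_ncard_compl
    {a ∈ (Set.univ : Set (TruncPoly K n)) | trEps K n hn a = 0}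
  rw [← e4, hcA] at c5
  rw [Set.ncard_univ, Set.ncard_univ, hcA, hcK] at c4
  rw [← e3] at c3
  rw [d1, d2] at c3
  rw [d2]
  obtain ⟨m, rfl⟩ : ∃ m, n = m + 1 := ⟨n - 1, by omega⟩
  rw [pow_succ q m] at c3
  have f3 := Nat.eq_of_mul_eq_mul_right hq0 c3
  rw [pow_succ (q ^ 2) m] at c4
  have f4 := Nat.eq_of_mul_eq_mul_right (pow_pos hq0 2) c4
  rw [f4] at c5
  rw [f3]
  have f5 : {u : TruncPoly K (m + 1) | IsUnit u}.ncard = (q ^ 2 - 1) * (q ^ 2) ^ m := by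
    rw [Nat.sub_mul, one_mul, ← pow_succ' (q ^ 2) m]
    omega
  rw [f5, show 3 * (m + 1) - 3 = 3 * m by omega]
  ring
end
end

section
/- Let a and c be elements of A_n such that A_n·a + A_n·c = A_n and a*c = c*a. Then there exists an antisymmetric element s ∈ A_n^asym such that a + sc is invertible in A_n. -/
open Polynomial Matrix

noncomputable section

theorem trunc_unit_or_nilp (K : Type) [Field K] (n : ℕ) (y : TruncPoly K n) :
    IsUnit y ∨ IsNilpotent y := by
  obtain ⟨f, rfl⟩ := AdjoinRoot.mk_surjective y
  have hX : IsNilpotent (AdjoinRoot.mk (X ^ n : K[X]) X) :=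
    ⟨n, by rw [← map_pow, AdjoinRoot.mk_self]⟩
  have hN : IsNilpotent (AdjoinRoot.mk (X ^ n : K[X]) (f.divX * X)) := by
    rw [map_mul]
    exact (Commute.all _ _).isNilpotent_mul_left hX
  have hf : AdjoinRoot.mk (X ^ n : K[X]) f
      = AdjoinRoot.mk (X ^ n : K[X]) (f.divX * X)
        + AdjoinRoot.mk (X ^ n : K[X]) (C (f.coeff 0)) := by
    rw [← map_add, divX_mul_X_add]
  by_cases h0 : f.coeff 0 = 0
  · right
    rw [hf, h0, C_0, map_zero, add_zero]
    exact hN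
  · left
    rw [hf]
    have hu : IsUnit (AdjoinRoot.mk (X ^ n : K[X]) (C (f.coeff 0))) :=
      ((IsUnit.mk0 _ h0).map C).map _
    exact hN.isUnit_add_right_of_commute hu (Commute.all _ _)

/-- if `A_n·a + A_n·c = A_n` and `a*c = c*a`, then there is an
antisymmetric `s` with `a + s·c` invertible. -/
theorem exists_asym_add_unit
    (p t q : ℕ) (hp : p.Prime) (hp2 : Odd p) (ht : 0 < t) (hq : q = p ^ t)
    (k K : Type) [Field k] [Fintype k] [Field K] [Fintype K] [Algebra k K]
    (hcardk : Fintype.card k = q) (hcardK : Fintype.card K = q ^ 2)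
    (Δ : K) (hΔ : Δ ∉ Set.range (algebraMap k K))
    (hΔ2 : Δ ^ 2 ∈ Set.range (algebraMap k K))
    (σ : K →+* K) (hσk : ∀ c : k, σ (algebraMap k K c) = algebraMap k K c)
    (hσne : σ ≠ RingHom.id K) (hσΔ : σ Δ = -Δ)
    (n : ℕ) (hn : 0 < n)
    (a c : TruncPoly K n)
    (hspan : Ideal.span {a, c} = (⊤ : Ideal (TruncPoly K n)))
    (hac : trStar K σ n a * c = trStar K σ n c * a) :
    ∃ s : TruncPoly K n, trStar K σ n s = -s ∧ IsUnit (a + s * c) := by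
  rcases trunc_unit_or_nilp K n a with ha | ha
  · exact ⟨0, by simp, by simpa using ha⟩
  have h1 : (1 : TruncPoly K n) ∈ Ideal.span {a, c} := by rw [hspan]; trivial
  obtain ⟨u, v, huv⟩ := Ideal.mem_span_pair.mp h1
  have hna : IsNilpotent (u * a) := (Commute.all _ _).isNilpotent_mul_left ha
  have hc : IsUnit c := by
    have h2 : IsUnit (v * c) := by
      have : v * c = 1 - u * a := by rw [← huv]; ring
      rw [this]
      exact hna.isUnit_one_sub
    exact isUnit_of_mul_isUnit_right h2
  have hD : Δ ≠ 0 := by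
    rintro rfl
    exact hΔ ⟨0, map_zero _⟩
  refine ⟨AdjoinRoot.of _ Δ, ?_, ?_⟩
  · unfold trStar
    rw [AdjoinRoot.lift_of, RingHom.comp_apply, hσΔ, map_neg]
  · exact ha.isUnit_add_right_of_commute (((IsUnit.mk0 _ hD).map _).mul hc) (Commute.all _ _)
end
end

section
/- Let a and b be two non-invertible antisymmetric elements of A_n. Then there exists an invertible antisymmetric element v ∈ A_n such that a − v^{−1} and b + v are both invertible antisymmetric elements of A_n. -/
open Polynomial Matrix

noncomputable section

theorem nilp_of_not_unit {K : Type} [Field K] (n : ℕ) (a : TruncPoly K n) (ha : ¬ IsUnit a) :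
    IsNilpotent a := by
  obtain ⟨f, rfl⟩ := AdjoinRoot.mk_surjective a
  by_cases h : (X : K[X]) ∣ f
  · refine ⟨n, ?_⟩
    rw [← map_pow, AdjoinRoot.mk_eq_zero]
    exact pow_dvd_pow_of_dvd h n
  · exfalso
    apply ha
    have hc : IsCoprime (X : K[X]) f := (Polynomial.irreducible_X.coprime_iff_not_dvd).2 h
    obtain ⟨u, v, huv⟩ := hc.pow_left (m := n)
    have := congrArg (AdjoinRoot.mk (X ^ n : K[X])) huv
    rw [map_add, map_mul, map_mul, AdjoinRoot.mk_self, mul_zero, zero_add, map_one] at this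
    exact IsUnit.of_mul_eq_one_right _ this

/-- given non-invertible antisymmetric `a`, `b` in `A_n`, there is an
invertible antisymmetric `v` with `a − v⁻¹` and `b + v` invertible antisymmetric. -/
theorem exists_asym_unit_shift
    (p t q : ℕ) (hp : p.Prime) (hp2 : Odd p) (ht : 0 < t) (hq : q = p ^ t)
    (k K : Type) [Field k] [Fintype k] [Field K] [Fintype K] [Algebra k K]
    (hcardk : Fintype.card k = q) (hcardK : Fintype.card K = q ^ 2)
    (Δ : K) (hΔ : Δ ∉ Set.range (algebraMap k K))
    (hΔ2 : Δ ^ 2 ∈ Set.range (algebraMap k K))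
    (σ : K →+* K) (hσk : ∀ c : k, σ (algebraMap k K c) = algebraMap k K c)
    (hσne : σ ≠ RingHom.id K) (hσΔ : σ Δ = -Δ)
    (n : ℕ) (hn : 0 < n)
    (a b : TruncPoly K n)
    (ha : trStar K σ n a = -a) (ha' : ¬ IsUnit a)
    (hb : trStar K σ n b = -b) (hb' : ¬ IsUnit b) :
    ∃ v : (TruncPoly K n)ˣ, trStar K σ n ↑v = -(↑v : TruncPoly K n) ∧
      IsUnit (a - (↑v⁻¹ : TruncPoly K n)) ∧
      trStar K σ n (a - (↑v⁻¹ : TruncPoly K n)) = -(a - (↑v⁻¹ : TruncPoly K n)) ∧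
      IsUnit (b + ↑v) ∧
      trStar K σ n (b + ↑v) = -(b + (↑v : TruncPoly K n)) := by
  have h0 : Δ ≠ 0 := fun h => hΔ ⟨0, by rw [map_zero, h]⟩
  have hof : ∀ c : K, trStar K σ n (AdjoinRoot.of _ c) = AdjoinRoot.of _ (σ c) := fun c => by
    simp [trStar]
  have na := nilp_of_not_unit n a ha'
  have nb := nilp_of_not_unit n b hb'
  let v : (TruncPoly K n)ˣ := Units.map (AdjoinRoot.of (X ^ n : K[X])).toMonoidHom (Units.mk0 Δ h0)
  have hv : (v : TruncPoly K n) = AdjoinRoot.of _ Δ := rfl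
  have hvi : ((v⁻¹ : (TruncPoly K n)ˣ) : TruncPoly K n) = AdjoinRoot.of _ Δ⁻¹ := rfl
  have e1 : trStar K σ n ↑v = -(↑v : TruncPoly K n) := by
    rw [hv, hof, hσΔ, map_neg]
  have e2 : trStar K σ n ↑v⁻¹ = -(↑v⁻¹ : TruncPoly K n) := by
    rw [hvi, hof, map_inv₀, hσΔ, inv_neg, map_neg]
  refine ⟨v, e1, ?_, ?_, ?_, ?_⟩
  · rw [sub_eq_add_neg]
    exact na.isUnit_add_right_of_commute (v⁻¹).isUnit.neg (Commute.all _ _)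
  · rw [map_sub, ha, e2]; ring
  · exact nb.isUnit_add_right_of_commute v.isUnit (Commute.all _ _)
  · rw [map_add, hb, e1]; ring
end
end

section
/- The group SL_*^1(2,A_n) is generated by the matrices h_t = [[t,0],[0,(t*)^{−1}]] for t ∈ A_n^×, u_s = [[1,s],[0,1]] for s ∈ A_n^asym, and w = [[0,1],[1,0]]. -/
open Polynomial Matrix

noncomputable section

/-- The diagonal generator `h_t = [[t,0],[0,(t*)⁻¹]]`. -/
def hMat (A : Type) [CommRing A] (st : A →+* A) (u : Aˣ) : Matrix (Fin 2) (Fin 2) A :=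
  !![(u : A), 0; 0, ((Units.map (st : A →* A) u)⁻¹ : Aˣ)]

/-- The unipotent generator `u_s = [[1,s],[0,1]]`. -/
def uMat (A : Type) [CommRing A] (s : A) : Matrix (Fin 2) (Fin 2) A := !![1, s; 0, 1]

/-- The Weyl element `w = [[0,1],[1,0]]`. -/
def wMat (A : Type) [CommRing A] : Matrix (Fin 2) (Fin 2) A := !![0, 1; 1, 0]

/-- The Bruhat generators `h_t` (`t` a unit), `u_s` (`s` antisymmetric) and `w`. -/
def bruhatGens (A : Type) [CommRing A] (st : A →+* A) : Set (Matrix (Fin 2) (Fin 2) A) :=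
  {m | (∃ u : Aˣ, m = hMat A st u) ∨ (∃ s : A, st s = -s ∧ m = uMat A s) ∨ m = wMat A}

theorem SLaux_mem (A : Type) [CommRing A] (st : A →+* A) (a b c d : A) :
    !![a, b; c, d] ∈ SLstarSet A st ↔
      (st c * a + st a * c = 0 ∧ st c * b + st a * d = 1 ∧
        st d * a + st b * c = 1 ∧ st d * b + st b * d = 0) := by
  simp only [SLstarSet, mStar, jMat, Set.mem_ofPred_eq]
  constructor
  · intro h
    have h00 := congrFun (congrFun h 0) 0
    have h01 := congrFun (congrFun h 0) 1
    have h10 := congrFun (congrFun h 1) 0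
    have h11 := congrFun (congrFun h 1) 1
    simp [Matrix.mul_apply, Fin.sum_univ_two] at h00 h01 h10 h11
    exact ⟨h00, h01, h10, h11⟩
  · rintro ⟨h00, h01, h10, h11⟩
    ext i j
    fin_cases i <;> fin_cases j <;> simp [Matrix.mul_apply, Fin.sum_univ_two] <;> assumption

theorem SLaux_mul (A : Type) [CommRing A] (st : A →+* A) (g h : Matrix (Fin 2) (Fin 2) A)
    (hg : g ∈ SLstarSet A st) (hh : h ∈ SLstarSet A st) : g * h ∈ SLstarSet A st := by
  simp only [SLstarSet, mStar, Set.mem_ofPred_eq] at *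
  rw [Matrix.map_mul, Matrix.transpose_mul]
  calc _ = (h.map st)ᵀ * ((g.map st)ᵀ * jMat A * g) * h := by simp only [Matrix.mul_assoc]
    _ = _ := by rw [hg, hh]

theorem SLaux_unit (A : Type) [CommRing A] (st : A →+* A) (hst : ∀ a, st (st a) = a)
    (u : Aˣ) (b c d : A) (hg : !![(u : A), b; c, d] ∈ SLstarSet A st) :
    !![(u : A), b; c, d] ∈ Submonoid.closure (bruhatGens A st) := by
  rw [SLaux_mem] at hg
  obtain ⟨h1, h2, h3, h4⟩ := hg
  set v : Aˣ := Units.map (st : A →* A) u with hv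
  have hvu : (v : A) = st u := rfl
  have hvi : ((v⁻¹ : Aˣ) : A) * st u = 1 := by rw [← hvu]; simp
  have hui : ((u⁻¹ : Aˣ) : A) * u = 1 := by simp
  have hsui : st ((u⁻¹ : Aˣ) : A) = ((v⁻¹ : Aˣ) : A) := by
    rw [hv, ← map_inv]; rfl
  have hsvi : st ((v⁻¹ : Aˣ) : A) = ((u⁻¹ : Aˣ) : A) := by
    rw [← hsui, hst]
  set U : A := ((u⁻¹ : Aˣ) : A)
  set V : A := ((v⁻¹ : Aˣ) : A)
  have hs : st (st u * c) = -(st u * c) := by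
    rw [map_mul, hst]; linear_combination h1
  have hc' := congrArg st h2
  simp only [map_add, map_mul, hst, map_one] at hc'
  have hb : st (U * b) = -(U * b) := by
    rw [map_mul, hsui]
    have k : (u : A) * st b + st u * b = 0 := by
      linear_combination b * st b * h1 + u * st u * h4 - u * st b * h2 - st u * b * h3
    linear_combination U * V * k - V * st b * hui - U * b * hvi
  have key : !![(u : A), b; c, d] =
      hMat A st u * (wMat A * uMat A (st u * c) * wMat A) * uMat A (U * b) := by
    have k2 : d = c * (U * b) + V := by
      linear_combination V * h2 - d * hvi - U * V * b * h1 + V * st c * b * hui + c * U * b * hvi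
    have k3 : V * (st u * c) = c := by linear_combination c * hvi
    have k4 : (u : A) * (U * b) = b := by linear_combination b * hui
    have e : hMat A st u * (wMat A * uMat A (st u * c) * wMat A) * uMat A (U * b) =
        !![(u : A), u * (U * b); V * (st u * c), V * (st u * c) * (U * b) + V] := by
      simp [hMat, wMat, uMat, V, v]
    rw [e, k3, k4, ← k2]
  have hh : hMat A st u ∈ Submonoid.closure (bruhatGens A st) :=
    Submonoid.subset_closure (Or.inl ⟨u, rfl⟩)
  have hw : wMat A ∈ Submonoid.closure (bruhatGens A st) :=
    Submonoid.subset_closure (Or.inr (Or.inr rfl))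
  have hu : ∀ s, st s = -s → uMat A s ∈ Submonoid.closure (bruhatGens A st) := fun s h =>
    Submonoid.subset_closure (Or.inr (Or.inl ⟨s, h, rfl⟩))
  rw [key]
  exact mul_mem (mul_mem hh (mul_mem (mul_mem hw (hu _ hs)) hw)) (hu _ hb)

theorem SLaux_main (A : Type) [CommRing A] (st : A →+* A) (hst : ∀ a, st (st a) = a)
    (hloc : ∀ a : A, IsUnit a ∨ IsNilpotent a) :
    SLstarSet A st = ↑(Submonoid.closure (bruhatGens A st)) := by
  have hwS : wMat A ∈ SLstarSet A st := by
    rw [wMat, SLaux_mem]; simp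
  apply Set.Subset.antisymm
  · intro g hg
    obtain ⟨a, b, c, d, rfl⟩ : ∃ a b c d, g = !![a, b; c, d] :=
      ⟨_, _, _, _, Matrix.eta_fin_two g⟩
    have hac : IsUnit a ∨ IsUnit c := by
      rcases hloc a with h | ha
      · exact Or.inl h
      rcases hloc c with h | hc
      · exact Or.inr h
      left
      obtain ⟨-, h2, -, -⟩ := (SLaux_mem A st a b c d).1 hg
      have h1 : IsNilpotent (st c * b + st a * d) :=
        (Commute.all _ _).isNilpotent_add
          ((Commute.all _ _).isNilpotent_mul_right (hc.map st))
          ((Commute.all _ _).isNilpotent_mul_right (ha.map st))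
      rw [h2] at h1
      obtain ⟨m, hm⟩ := h1
      rw [one_pow] at hm
      have : Subsingleton A := subsingleton_of_zero_eq_one hm.symm
      exact isUnit_of_subsingleton a
    rcases hac with ⟨u, rfl⟩ | ⟨u, rfl⟩
    · exact SLaux_unit A st hst u b c d hg
    · have e : wMat A * !![a, b; (u : A), d] = !![(u : A), d; a, b] := by
        simp [wMat]
      have e2 : !![a, b; (u : A), d] = wMat A * !![(u : A), d; a, b] := by
        simp [wMat]
      have h := SLaux_mul A st _ _ hwS hg
      rw [e] at h
      rw [e2]
      exact mul_mem (Submonoid.subset_closure (Or.inr (Or.inr rfl)))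
        (SLaux_unit A st hst u d a b h)
  · intro g hg
    refine Submonoid.closure_induction (motive := fun g _ => g ∈ SLstarSet A st) ?_ ?_ ?_ hg
    · rintro x (⟨u, rfl⟩ | ⟨s, hs, rfl⟩ | rfl)
      · rw [hMat, SLaux_mem]
        have e : st (((Units.map (st : A →* A) u)⁻¹ : Aˣ) : A) = ((u⁻¹ : Aˣ) : A) := by
          rw [← map_inv]; exact hst _
        have e2 : st u * (((Units.map (st : A →* A) u)⁻¹ : Aˣ) : A) = 1 :=
          (Units.map (st : A →* A) u).mul_inv
        rw [e, e2]
        simp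
      · rw [uMat, SLaux_mem, hs]; simp
      · exact hwS
    · rw [Matrix.one_fin_two, SLaux_mem]; simp
    · intro x y _ _ hx hy
      exact SLaux_mul A st x y hx hy

theorem SLaux_loc (K : Type) [Field K] (n : ℕ) (a : TruncPoly K n) :
    IsUnit a ∨ IsNilpotent a := by
  obtain ⟨f, rfl⟩ := AdjoinRoot.mk_surjective a
  by_cases h : f.coeff 0 = 0
  · right
    obtain ⟨g, rfl⟩ := X_dvd_iff.2 h
    refine ⟨n, ?_⟩
    rw [← map_pow, mul_pow, map_mul, AdjoinRoot.mk_self, zero_mul]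
  · left
    have hc : IsCoprime f (X ^ n) := by
      apply IsCoprime.pow_right
      refine ((Polynomial.irreducible_X.coprime_iff_not_dvd).2 ?_).symm
      rwa [X_dvd_iff]
    obtain ⟨r, s, hrs⟩ := hc
    have := congrArg (AdjoinRoot.mk (X ^ n : K[X])) hrs
    rw [map_add, map_mul, map_mul, AdjoinRoot.mk_self, mul_zero, add_zero, map_one] at this
    exact IsUnit.of_mul_eq_one_right _ this

theorem SLaux_inv (K : Type) [Field K] (σ : K →+* K) (hσ : ∀ x, σ (σ x) = x) (n : ℕ)
    (a : TruncPoly K n) : trStar K σ n (trStar K σ n a) = a := by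
  have : (trStar K σ n).comp (trStar K σ n) = RingHom.id _ := by
    apply AdjoinRoot.ringHom_ext
    · ext x
      simp [trStar, hσ]
    · simp [trStar]
  exact congrArg (fun f : TruncPoly K n →+* TruncPoly K n => f a) this

/-- `SL_*^1(2,A_n)` is generated by the matrices `h_t` (`t ∈ A_nˣ`),
`u_s` (`s` antisymmetric) and `w`. -/
theorem SLstar_generated_by_bruhat
    (p t q : ℕ) (hp : p.Prime) (hp2 : Odd p) (ht : 0 < t) (hq : q = p ^ t)
    (k K : Type) [Field k] [Fintype k] [Field K] [Fintype K] [Algebra k K]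
    (hcardk : Fintype.card k = q) (hcardK : Fintype.card K = q ^ 2)
    (Δ : K) (hΔ : Δ ∉ Set.range (algebraMap k K))
    (hΔ2 : Δ ^ 2 ∈ Set.range (algebraMap k K))
    (σ : K →+* K) (hσk : ∀ c : k, σ (algebraMap k K c) = algebraMap k K c)
    (hσne : σ ≠ RingHom.id K) (hσΔ : σ Δ = -Δ)
    (n : ℕ) (hn : 0 < n) :
    SLstarSet (TruncPoly K n) (trStar K σ n) =
      ↑(Submonoid.closure (bruhatGens (TruncPoly K n) (trStar K σ n))) := by
  have hσσ : ∀ x, σ (σ x) = x := by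
    let f : k × k → K := fun z => algebraMap k K z.1 + algebraMap k K z.2 * Δ
    have hf : Function.Injective f := by
      rintro ⟨a, b⟩ ⟨c, d⟩ h
      simp only [f] at h
      have hbd : b = d := by
        by_contra hne
        apply hΔ
        refine ⟨(c - a) / (b - d), ?_⟩
        have hne' : algebraMap k K b - algebraMap k K d ≠ 0 := by
          rw [← map_sub]
          exact (_root_.map_ne_zero _).2 (sub_ne_zero.2 hne)
        rw [map_div₀, map_sub, map_sub, div_eq_iff hne']
        linear_combination -h
      subst hbd
      have := (algebraMap k K).injective (add_right_cancel h)
      rw [this]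
    have hb : Function.Bijective f := by
      rw [Fintype.bijective_iff_injective_and_card]
      refine ⟨hf, ?_⟩
      rw [Fintype.card_prod, hcardk, hcardK, sq]
    intro x
    obtain ⟨⟨a, b⟩, rfl⟩ := hb.2 x
    simp [f, hσk, hσΔ]
  exact SLaux_main _ _ (SLaux_inv K σ hσσ n) (SLaux_loc K n)
end
end

section
/- The group SL_*^1(2,A_n) is isomorphic to the group presented by generators H_t (t ∈ A_n^×), U_s (s ∈ A_n^asym), W, subject to the relations H_{t₁}H_{t₂} = H_{t₁t₂}, U_{s₁}U_{s₂} = U_{s₁+s₂}, H_t U_s = U_{t s t*} H_t, W² = 1, H_t W = W H_{(t*)^{−1}}, and W U_{t^{−1}} W U_{−t} W U_{t^{−1}} = H_{−t} for invertible antisymmetric t; the isomorphism sends H_t, U_s, W to the matrices h_t, u_s, w respectively. -/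
open Polynomial Matrix

noncomputable section

/-- Abstract generators for the Bruhat presentation: `H t` for units `t`,
`U s` for antisymmetric `s`, and `W`. -/
inductive BGen (A : Type) [CommRing A] (st : A →+* A) : Type
  | H : Aˣ → BGen A st
  | U : {s : A // st s = -s} → BGen A st
  | W : BGen A st

/-- The relators of the Bruhat presentation. -/
def bruhatRels (A : Type) [CommRing A] (st : A →+* A) : Set (FreeGroup (BGen A st)) :=
  {r | (∃ t₁ t₂ : Aˣ,
          r = FreeGroup.of (BGen.H t₁) * FreeGroup.of (BGen.H t₂) * (FreeGroup.of (BGen.H (t₁ * t₂)))⁻¹) ∨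
       (∃ s₁ s₂ s₃ : {s : A // st s = -s}, (s₃ : A) = ↑s₁ + ↑s₂ ∧
          r = FreeGroup.of (BGen.U s₁) * FreeGroup.of (BGen.U s₂) * (FreeGroup.of (BGen.U s₃))⁻¹) ∨
       (∃ (u : Aˣ) (s s' : {s : A // st s = -s}), (s' : A) = ↑u * ↑s * st ↑u ∧
          r = FreeGroup.of (BGen.H u) * FreeGroup.of (BGen.U s) * (FreeGroup.of (BGen.U s') * FreeGroup.of (BGen.H u))⁻¹) ∨
       (r = FreeGroup.of (BGen.W : BGen A st) * FreeGroup.of BGen.W) ∨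
       (∃ u : Aˣ,
          r = FreeGroup.of (BGen.H u) * FreeGroup.of BGen.W *
            (FreeGroup.of BGen.W * FreeGroup.of (BGen.H ((Units.map (st : A →* A) u)⁻¹)))⁻¹) ∨
       (∃ (u : Aˣ) (s₁ s₂ : {s : A // st s = -s}),
          st ↑u = -(↑u : A) ∧ (s₁ : A) = ↑u⁻¹ ∧ (s₂ : A) = -↑u ∧
          r = FreeGroup.of BGen.W * FreeGroup.of (BGen.U s₁) * FreeGroup.of BGen.W * FreeGroup.of (BGen.U s₂) *
              FreeGroup.of BGen.W * FreeGroup.of (BGen.U s₁) * (FreeGroup.of (BGen.H (-u)))⁻¹)}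

section Aux

lemma trStar_invol (K : Type) [CommRing K] (σ : K →+* K) (h : ∀ x, σ (σ x) = x) (n : ℕ)
    (a : TruncPoly K n) : trStar K σ n (trStar K σ n a) = a := by
  have : ((trStar K σ n).comp (trStar K σ n)).comp (AdjoinRoot.mk (X ^ n : K[X])) =
      AdjoinRoot.mk (X ^ n : K[X]) := by
    apply Polynomial.ringHom_ext
    · intro c
      simp [trStar, h]
    · simp [trStar]
  obtain ⟨f, rfl⟩ := AdjoinRoot.mk_surjective a
  exact RingHom.congr_fun this f

lemma trunc_local (K : Type) [Field K] (n : ℕ) (hn : 0 < n) : IsLocalRing (TruncPoly K n) := by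
  have : Nontrivial (TruncPoly K n) := by
    apply AdjoinRoot.nontrivial
    rw [degree_X_pow]
    exact_mod_cast hn.ne'
  have hnil : IsNilpotent (AdjoinRoot.root (X ^ n : K[X])) :=
    ⟨n, by rw [← AdjoinRoot.mk_X, ← map_pow, AdjoinRoot.mk_self]⟩
  apply IsLocalRing.of_isUnit_or_isUnit_one_sub_self
  intro a
  obtain ⟨f, rfl⟩ := AdjoinRoot.mk_surjective a
  rw [← Polynomial.divX_mul_X_add f, map_add, map_mul, AdjoinRoot.mk_X, AdjoinRoot.mk_C]
  have h2 : IsNilpotent (AdjoinRoot.mk (X ^ n : K[X]) f.divX * AdjoinRoot.root (X ^ n : K[X])) :=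
    (Commute.all _ _).isNilpotent_mul_left hnil
  by_cases hc : f.coeff 0 = 0
  · right
    rw [hc, map_zero, add_zero]
    exact h2.isUnit_one_sub
  · left
    have hu : IsUnit (AdjoinRoot.of (X ^ n : K[X]) (f.coeff 0)) :=
      (IsUnit.mk0 _ hc).map (AdjoinRoot.of (X ^ n : K[X]))
    exact h2.isUnit_add_right_of_commute hu (Commute.all _ _)

lemma sigma_invol (q : ℕ) (hq : 1 < q)
    (k K : Type) [Field k] [Fintype k] [Field K] [Fintype K] [Algebra k K]
    (hcardk : Fintype.card k = q) (hcardK : Fintype.card K = q ^ 2)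
    (Δ : K) (hΔ : Δ ∉ Set.range (algebraMap k K))
    (σ : K →+* K) (hσk : ∀ c : k, σ (algebraMap k K c) = algebraMap k K c)
    (hσΔ : σ Δ = -Δ) (x : K) : σ (σ x) = x := by
  have hf : Module.finrank k K = 2 := by
    have := Module.card_eq_pow_finrank (K := k) (V := K)
    rw [hcardk, hcardK] at this
    exact (Nat.pow_right_injective hq this).symm
  have := Subalgebra.isSimpleOrder_of_finrank hf
  let τ : K →ₐ[k] K := { σ with commutes' := hσk }
  have hτ : ∀ y, τ y = σ y := fun _ => rfl
  let S := AlgHom.equalizer (τ.comp τ) (AlgHom.id k K)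
  have hmem : ∀ y, y ∈ S ↔ σ (σ y) = y := fun y => by
    simp only [S, AlgHom.mem_equalizer, AlgHom.comp_apply, hτ, AlgHom.id_apply]
  rw [← hmem]
  rcases eq_bot_or_eq_top S with h | h
  · exfalso
    have : Δ ∈ S := by rw [hmem, hσΔ, map_neg, hσΔ, neg_neg]
    rw [h, Algebra.mem_bot] at this
    exact hΔ this
  · rw [h]; trivial

variable {A : Type} [CommRing A] (st : A →+* A)


/-- Abstract closure: the union of the two cells is stable under left multiplication. -/
lemma cells {G : Type} [Group G] [IsLocalRing A] (hst : ∀ a, st (st a) = a)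
    (e : A) (he : IsUnit e) (hea : st e = -e)
    (H : Aˣ → G) (U : {s : A // st s = -s} → G) (W : G)
    (r1 : ∀ a b, H a * H b = H (a * b))
    (r2 : ∀ a b c : {s : A // st s = -s}, (c : A) = a + b → U a * U b = U c)
    (r3 : ∀ (u : Aˣ) (s s' : {s : A // st s = -s}), (s' : A) = u * s * st u →
      H u * U s = U s' * H u)
    (r4 : W * W = 1)
    (r5 : ∀ u : Aˣ, H u * W = W * H (Units.map (st : A →* A) u)⁻¹)
    (r6 : ∀ (u : Aˣ) (s₁ s₂ : {s : A // st s = -s}), st u = -(u : A) → (s₁ : A) = ↑u⁻¹ →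
      (s₂ : A) = -u → W * U s₁ * W * U s₂ * W * U s₁ = H (-u)) 
    (P Q : G → Prop) (hP : ∀ g, P g ↔ ∃ x t y, g = U x * H t * W * U y)
    (hQ : ∀ g, Q g ↔ P g ∨ P (W * g)) :
    (H 1 = 1) ∧ (∀ z : {s : A // st s = -s}, (z : A) = 0 → U z = 1) ∧
      Q 1 ∧ (∀ g, Q g → Q (W * g)) ∧ (∀ t g, Q g → Q (H t * g)) ∧
        (∀ s g, Q g → Q (U s * g)) := by
  have H1 : H 1 = 1 := by
    have := r1 1 1
    rw [mul_one] at this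
    exact mul_eq_left.mp this
  have U0 : ∀ z : {s : A // st s = -s}, (z : A) = 0 → U z = 1 := by
    intro z hz
    have := r2 z z z (by rw [hz, add_zero])
    exact mul_eq_left.mp this
  have WW : ∀ g, W * (W * g) = g := fun g => by rw [← mul_assoc, r4, one_mul]
  have addU : ∀ a b : {s : A // st s = -s}, ∃ c : {s : A // st s = -s}, (c : A) = a + b ∧ U a * U b = U c := by
    intro a b
    have : st ((a : A) + b) = -((a : A) + b) := by rw [map_add, a.2, b.2]; ring
    exact ⟨⟨_, this⟩, rfl, r2 _ _ _ rfl⟩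
  have HU : ∀ t a, ∃ b, H t * U a = U b * H t := by
    intro t a
    have : st ((t : A) * a * st t) = -((t : A) * a * st t) := by
      rw [map_mul, map_mul, a.2, hst]; ring
    exact ⟨⟨_, this⟩, r3 _ _ _ rfl⟩
  have Hinv : ∀ t, H t * H t⁻¹ = 1 := fun t => by rw [r1, mul_inv_cancel, H1]
  have Hinv2 : ∀ t, H t⁻¹ * H t = 1 := fun t => by rw [r1, inv_mul_cancel, H1]
  have UH : ∀ t a, ∃ b, U a * H t = H t * U b := by
    intro t a
    obtain ⟨b, hb⟩ := HU t⁻¹ a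
    refine ⟨b, ?_⟩
    calc U a * H t = H t * (H t⁻¹ * U a) * H t := by rw [← mul_assoc, Hinv, one_mul]
      _ = H t * U b * (H t⁻¹ * H t) := by rw [hb]; group
      _ = _ := by rw [Hinv2, mul_one]
  have HW : ∀ t, ∃ t', H t * W = W * H t' := fun t => ⟨_, r5 t⟩
  have WH : ∀ t, ∃ t', W * H t = H t' * W := by
    intro t
    refine ⟨(Units.map (st : A →* A) t)⁻¹, ?_⟩
    rw [r5]
    congr 2
    ext
    simp [hst]
  -- cell closure
  have PU : ∀ s g, P g → P (U s * g) := by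
    intro s g hg
    obtain ⟨x, t, y, rfl⟩ := (hP _).1 hg
    obtain ⟨c, -, hc⟩ := addU s x
    exact (hP _).2 ⟨c, t, y, by rw [← hc]; group⟩
  have PH : ∀ r g, P g → P (H r * g) := by
    intro r g hg
    obtain ⟨x, t, y, rfl⟩ := (hP _).1 hg
    obtain ⟨c, hc⟩ := HU r x
    exact (hP _).2 ⟨c, r * t, y, by rw [← r1]; simp only [← mul_assoc]; rw [hc]⟩
  have PUr : ∀ s g, P g → P (g * U s) := by
    intro s g hg
    obtain ⟨x, t, y, rfl⟩ := (hP _).1 hg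
    obtain ⟨c, -, hc⟩ := addU y s
    exact (hP _).2 ⟨x, t, c, by rw [← hc]; group⟩
  have PHr : ∀ r g, P g → P (g * H r) := by
    intro r g hg
    obtain ⟨x, t, y, rfl⟩ := (hP _).1 hg
    obtain ⟨c, hc⟩ := UH r y
    obtain ⟨r', hr⟩ := WH r
    refine (hP _).2 ⟨x, t * r', c, ?_⟩
    calc U x * H t * W * U y * H r = U x * H t * W * (U y * H r) := by group
      _ = U x * H t * (W * H r) * U c := by rw [hc]; group
      _ = U x * (H t * H r') * W * U c := by rw [hr]; group
      _ = _ := by rw [r1]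
  have key : ∀ s : {s : A // st s = -s}, IsUnit (s : A) →
      ∃ (x : {s : A // st s = -s}) (t : Aˣ) (y : {s : A // st s = -s}), IsUnit (y : A) ∧ W * U s * W = U x * H t * W * U y := by
    intro s hs
    obtain ⟨v, hv⟩ := hs
    have hs1 : st (v : A) = -(v : A) := by rw [hv]; exact s.2
    have hu : st ((v⁻¹ : Aˣ) : A) = -((v⁻¹ : Aˣ) : A) := by
      have h1 : st ((v⁻¹ : Aˣ) : A) * st (v : A) = 1 := by
        rw [← map_mul, Units.inv_mul, map_one]
      rw [hs1] at h1
      have h2 : ((v⁻¹ : Aˣ) : A) * v = 1 := Units.inv_mul v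
      have h3 : (v : A) * ((v⁻¹ : Aˣ) : A) = 1 := Units.mul_inv v
      linear_combination (-((v⁻¹ : Aˣ) : A)) * h1 - st ((v⁻¹ : Aˣ) : A) * h2
    have hu2 : st (-((v⁻¹ : Aˣ) : A)) = - -((v⁻¹ : Aˣ) : A) := by rw [map_neg, hu]
    have hs2 : st (-(s : A)) = - -(s : A) := by rw [map_neg, s.2]
    have R := r6 v⁻¹ s ⟨_, hu2⟩ hu (by rw [inv_inv, hv]) rfl
    have e1 : U ⟨_, hu2⟩ * U ⟨_, hu⟩ = 1 := by
      obtain ⟨c, hc, h⟩ := addU ⟨_, hu2⟩ ⟨_, hu⟩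
      rw [h]; apply U0; rw [hc]; simp
    have e2 : U s * U ⟨_, hs2⟩ = 1 := by
      obtain ⟨c, hc, h⟩ := addU s ⟨_, hs2⟩
      rw [h]; apply U0; rw [hc]; simp
    obtain ⟨x, hx⟩ := HU (-v⁻¹) ⟨_, hs2⟩
    refine ⟨x, -v⁻¹, ⟨_, hu⟩, Units.isUnit v⁻¹, ?_⟩
    rw [← hx, ← R]
    symm
    calc W * U s * W * U ⟨_, hu2⟩ * W * U s * U ⟨_, hs2⟩ * W * U ⟨_, hu⟩
        = W * U s * W * U ⟨_, hu2⟩ * W * (U s * U ⟨_, hs2⟩) * W * U ⟨_, hu⟩ := by group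
      _ = W * U s * W * U ⟨_, hu2⟩ * (W * W) * U ⟨_, hu⟩ := by rw [e2]; group
      _ = W * U s * W * (U ⟨_, hu2⟩ * U ⟨_, hu⟩) := by rw [r4]; group
      _ = _ := by rw [e1, mul_one]
  have keyP : ∀ s : {s : A // st s = -s}, IsUnit (s : A) → P (W * U s * W) := by
    intro s hs
    obtain ⟨x, t, y, -, h⟩ := key s hs
    exact (hP _).2 ⟨x, t, y, h⟩
  have QU1 : ∀ s : {s : A // st s = -s}, IsUnit (s : A) → ∀ g, Q g → Q (U s * g) := by
    intro s hs g hg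
    rcases (hQ _).1 hg with hg | hg
    · exact (hQ _).2 (Or.inl (PU _ _ hg))
    obtain ⟨x, t, y, h⟩ := (hP _).1 hg
    have hg' : g = W * (U x * H t * W * U y) := by rw [← h, WW]
    obtain ⟨t', ht⟩ := HW t
    have hg2 : g = W * U x * W * H t' * U y := by
      calc g = W * U x * (H t * W) * U y := by rw [hg']; group
        _ = _ := by rw [ht]; group
    by_cases hx : IsUnit (x : A)
    · refine (hQ _).2 (Or.inl (PU _ _ ?_))
      rw [hg2]
      exact PUr _ _ (PHr _ _ (keyP x hx))
    · refine (hQ _).2 (Or.inr ?_)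
      obtain ⟨a, b, c, hc, hh⟩ := key s hs
      obtain ⟨d, hd, hcd⟩ := addU c x
      have hdu : IsUnit (d : A) := by
        by_contra hnd
        have : (c : A) = d - x := by rw [hd]; ring
        have h3 : (c : A) ∈ IsLocalRing.maximalIdeal A := by
          rw [this]
          exact Ideal.sub_mem _ hnd hx
        exact h3 hc
      have : W * (U s * g) = U a * (H b * (W * U d * W * H t' * U y)) := by
        calc W * (U s * g) = (W * U s * W) * U x * W * H t' * U y := by rw [hg2]; group
          _ = U a * H b * W * (U c * U x) * W * H t' * U y := by rw [hh]; group
          _ = _ := by rw [hcd]; group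
      rw [this]
      exact PU _ _ (PH _ _ (PUr _ _ (PHr _ _ (keyP d hdu))))
  refine ⟨H1, U0, ?_, ?_, ?_, ?_⟩
  · refine (hQ _).2 (Or.inr ((hP _).2 ⟨⟨0, by simp⟩, 1, ⟨0, by simp⟩, ?_⟩))
    rw [U0 ⟨0, _⟩ rfl, H1]; group
  · intro g hg
    rcases (hQ _).1 hg with hg | hg
    · exact (hQ _).2 (Or.inr (by rwa [WW]))
    · exact (hQ _).2 (Or.inl hg)
  · intro t g hg
    rcases (hQ _).1 hg with hg | hg
    · exact (hQ _).2 (Or.inl (PH _ _ hg))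
    · obtain ⟨t', h⟩ := WH t
      refine (hQ _).2 (Or.inr ?_)
      rw [← mul_assoc, h, mul_assoc]
      exact PH _ _ hg
  · intro s g hg
    by_cases hs : IsUnit (s : A)
    · exact QU1 s hs g hg
    · have hd : st ((s : A) - e) = -((s : A) - e) := by rw [map_sub, s.2, hea]; ring
      have hdu : IsUnit ((s : A) - e) := by
        by_contra hnd
        have : e = s - (s - e) := by ring
        have h3 : e ∈ IsLocalRing.maximalIdeal A := by
          rw [this]
          exact Ideal.sub_mem _ hs hnd
        exact h3 he
      rw [← r2 ⟨_, hd⟩ ⟨e, hea⟩ s (by simp), mul_assoc]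
      exact QU1 _ hdu _ (QU1 _ he _ hg)

lemma SL_mul {g h : Matrix (Fin 2) (Fin 2) A} (hg : g ∈ SLstarSet A st)
    (hh : h ∈ SLstarSet A st) : g * h ∈ SLstarSet A st := by
  simp only [SLstarSet, Set.mem_ofPred_eq, mStar] at *
  rw [Matrix.map_mul, Matrix.transpose_mul]
  calc _ = (h.map st)ᵀ * ((g.map st)ᵀ * jMat A * g) * h := by simp only [Matrix.mul_assoc]
    _ = _ := by rw [hg, hh]

lemma SL_iff (g : Matrix (Fin 2) (Fin 2) A) : g ∈ SLstarSet A st ↔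
    (st (g 1 0) * g 0 0 + st (g 0 0) * g 1 0 = 0 ∧ st (g 1 0) * g 0 1 + st (g 0 0) * g 1 1 = 1 ∧
     st (g 1 1) * g 0 0 + st (g 0 1) * g 1 0 = 1 ∧ st (g 1 1) * g 0 1 + st (g 0 1) * g 1 1 = 0) := by
  simp only [SLstarSet, Set.mem_ofPred_eq, mStar, jMat]
  constructor
  · intro h
    have h00 := congrFun (congrFun h 0) 0
    have h01 := congrFun (congrFun h 0) 1
    have h10 := congrFun (congrFun h 1) 0
    have h11 := congrFun (congrFun h 1) 1
    simp [Matrix.mul_apply, Fin.sum_univ_two] at h00 h01 h10 h11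
    exact ⟨h00, h01, h10, h11⟩
  · rintro ⟨h00, h01, h10, h11⟩
    ext i j
    fin_cases i <;> fin_cases j <;> simp [Matrix.mul_apply, Fin.sum_univ_two, *]

lemma st_inv_cancel (u : Aˣ) : st u * ((Units.map (st : A →* A) u)⁻¹ : Aˣ) = 1 := by
  have := Units.mul_inv (Units.map (st : A →* A) u)
  simpa using this

lemma SL_h (hst : ∀ a, st (st a) = a) (u : Aˣ) : hMat A st u ∈ SLstarSet A st := by
  have h := st_inv_cancel st u
  have h' := congrArg st h
  rw [map_mul, hst, map_one] at h'
  rw [SL_iff]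
  simp only [hMat, Matrix.of_apply, Matrix.cons_val', Matrix.cons_val_zero, Matrix.cons_val_one,
    Matrix.cons_val_fin_one, map_zero]
  refine ⟨by ring, by linear_combination h, by linear_combination h', by ring⟩

lemma SL_u (s : A) (hs : st s = -s) : uMat A s ∈ SLstarSet A st := by
  rw [SL_iff]; simp [uMat, hs]

lemma SL_w : wMat A ∈ SLstarSet A st := by
  rw [SL_iff]; simp [wMat]

lemma form (x y : A) (t : Aˣ) : uMat A x * hMat A st t * wMat A * uMat A y =
    !![x * ((Units.map (st : A →* A) t)⁻¹ : Aˣ), x * ((Units.map (st : A →* A) t)⁻¹ : Aˣ) * y + t;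
      ((Units.map (st : A →* A) t)⁻¹ : Aˣ), ((Units.map (st : A →* A) t)⁻¹ : Aˣ) * y] := by
  simp [uMat, hMat, wMat]

/-- Big cell decomposition. -/
lemma bigcell (hst : ∀ a, st (st a) = a) (g : Matrix (Fin 2) (Fin 2) A)
    (hg : g ∈ SLstarSet A st) (hc : IsUnit (g 1 0)) :
    ∃ (x y : {s : A // st s = -s}) (t : Aˣ), g = uMat A x * hMat A st t * wMat A * uMat A y := by
  obtain ⟨v, hv⟩ := hc
  obtain ⟨h1, h2, h3, h4⟩ := (SL_iff st g).1 hg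
  rw [← hv] at h1 h2 h3
  obtain ⟨i, hi⟩ : ∃ i : A, i = ((v⁻¹ : Aˣ) : A) := ⟨_, rfl⟩
  have vi : (v : A) * i = 1 := by rw [hi]; simp
  have svi : st v * st i = 1 := by rw [← map_mul, vi, map_one]
  have hx : st (g 0 0 * i) = -(g 0 0 * i) := by
    rw [map_mul]
    linear_combination (st i * i) * h1 - st (g 0 0) * st i * vi - g 0 0 * i * svi
  have hb : g 0 1 = st i - st (g 0 0) * st i * g 1 1 := by
    linear_combination st i * h2 - g 0 1 * svi
  have hb' : st (g 0 1) = i - g 0 0 * i * st (g 1 1) := by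
    rw [hb]; simp [hst]
  have hy : st (i * g 1 1) = -(i * g 1 1) := by
    rw [map_mul] at hx ⊢
    linear_combination h4 - st (g 1 1) * hb - g 1 1 * hb' + st (g 1 1) * g 1 1 * hx
  refine ⟨⟨_, hx⟩, ⟨_, hy⟩, (Units.map (st : A →* A) v)⁻¹, ?_⟩
  rw [form]
  have hT : ((Units.map (st : A →* A) (Units.map (st : A →* A) v)⁻¹)⁻¹ : Aˣ) = v := by
    ext; simp [hst]
  have hT2 : (((Units.map (st : A →* A) v)⁻¹ : Aˣ) : A) = st i := by
    rw [hi, ← map_inv]; rfl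
  rw [hT, hT2]
  ext a b
  fin_cases a <;> fin_cases b
  · simp; linear_combination -g 0 0 * vi
  · simp
    rw [map_mul] at hx
    linear_combination hb - g 1 1 * hx - g 0 0 * i * g 1 1 * vi
  · simp [hv]
  · simp; linear_combination -g 1 1 * vi

/-- Unit lifts of the generators. -/
def genUnit (hst : ∀ a, st (st a) = a) : BGen A st → (Matrix (Fin 2) (Fin 2) A)ˣ
  | BGen.H u => ⟨hMat A st u, hMat A st u⁻¹, by
      simp [hMat, Matrix.one_fin_two, ← map_mul], by
      simp [hMat, Matrix.one_fin_two, ← map_mul]⟩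
  | BGen.U s => ⟨uMat A s, uMat A (-s), by
      simp [uMat, Matrix.one_fin_two], by
      simp [uMat, Matrix.one_fin_two]⟩
  | BGen.W => ⟨wMat A, wMat A, by
      simp [wMat, Matrix.one_fin_two], by
      simp [wMat, Matrix.one_fin_two]⟩

lemma gen_H (hst : ∀ a, st (st a) = a) (u : Aˣ) :
    ((genUnit st hst (BGen.H u) : (Matrix (Fin 2) (Fin 2) A)ˣ) : Matrix (Fin 2) (Fin 2) A) =
      hMat A st u := rfl

lemma gen_U (hst : ∀ a, st (st a) = a) (s : {s : A // st s = -s}) :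
    ((genUnit st hst (BGen.U s) : (Matrix (Fin 2) (Fin 2) A)ˣ) : Matrix (Fin 2) (Fin 2) A) =
      uMat A s := rfl

lemma gen_W (hst : ∀ a, st (st a) = a) :
    ((genUnit st hst BGen.W : (Matrix (Fin 2) (Fin 2) A)ˣ) : Matrix (Fin 2) (Fin 2) A) =
      wMat A := rfl

lemma gen_rels (hst : ∀ a, st (st a) = a) :
    ∀ r ∈ bruhatRels A st, FreeGroup.lift (genUnit st hst) r = 1 := by
  rintro r (⟨a, b, rfl⟩ | ⟨a, b, c, h, rfl⟩ | ⟨u, s, s', h, rfl⟩ | rfl | ⟨u, rfl⟩ |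
    ⟨u, a, b, hu, ha, hb, rfl⟩)
  all_goals
    simp only [map_mul, map_inv, FreeGroup.lift_apply_of]
  · rw [mul_inv_eq_one]
    apply Units.ext
    simp only [Units.val_mul, gen_H]
    simp [hMat, mul_comm]
  · rw [mul_inv_eq_one]
    apply Units.ext
    simp only [Units.val_mul, gen_U]
    simp [uMat, h, add_comm]
  · rw [mul_inv_eq_one]
    apply Units.ext
    simp only [Units.val_mul, gen_U, gen_H]
    have := st_inv_cancel st u
    simp only [uMat, hMat, h, Matrix.mul_fin_two]
    ext i j
    fin_cases i <;> fin_cases j <;> simp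
    simp only [← map_inv, Units.coe_map] at this
    have this' : st u * st ((u⁻¹ : Aˣ) : A) = 1 := this
    linear_combination -(u : A) * s * this'
  · apply Units.ext
    simp only [Units.val_mul, gen_W]
    simp [wMat, Matrix.one_fin_two]
  · rw [mul_inv_eq_one]
    apply Units.ext
    simp only [Units.val_mul, gen_W, gen_H]
    have : ((Units.map (st : A →* A) (Units.map (st : A →* A) u)⁻¹)⁻¹ : Aˣ) = u := by
      ext; simp [hst]
    simp only [hMat, this]
    simp [wMat]
  · rw [mul_inv_eq_one]
    apply Units.ext
    simp only [Units.val_mul, gen_W, gen_H, gen_U]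
    have h1 : ((Units.map (st : A →* A) (-u))⁻¹ : Aˣ) = u⁻¹ := by
      congr 1; ext; simp [hu]
    simp only [hMat, h1]
    simp [wMat, uMat, ha, hb]

lemma main_general [IsLocalRing A] (hst : ∀ a, st (st a) = a)
    (e : A) (he : IsUnit e) (hea : st e = -e) :
    ∃ φ : PresentedGroup (bruhatRels A st) →* Matrix (Fin 2) (Fin 2) A,
      Function.Injective φ ∧
      Set.range ⇑φ = SLstarSet A st ∧
      (∀ u : Aˣ, φ (PresentedGroup.of (BGen.H u)) = hMat A st u) ∧
      (∀ s : {s : A // st s = -s}, φ (PresentedGroup.of (BGen.U s)) = uMat A ↑s) ∧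
      φ (PresentedGroup.of BGen.W) = wMat A := by
  let ψ := PresentedGroup.toGroup (gen_rels st hst)
  let φ := (Units.coeHom (Matrix (Fin 2) (Fin 2) A)).comp ψ
  let R := bruhatRels A st
  have φH : ∀ u : Aˣ, φ (PresentedGroup.of (BGen.H u)) = hMat A st u := fun u => by
    simp only [φ, ψ, MonoidHom.comp_apply, PresentedGroup.toGroup.of]; rfl
  have φU : ∀ s : {s : A // st s = -s}, φ (PresentedGroup.of (BGen.U s)) = uMat A ↑s := fun u => by
    simp only [φ, ψ, MonoidHom.comp_apply, PresentedGroup.toGroup.of]; rfl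
  have φW : φ (PresentedGroup.of BGen.W) = wMat A := by
    simp only [φ, ψ, MonoidHom.comp_apply, PresentedGroup.toGroup.of]; rfl
  have rel : ∀ r ∈ R, PresentedGroup.mk R r = 1 := fun r hr =>
    PresentedGroup.one_of_mem hr
  let H : Aˣ → PresentedGroup R := fun u => PresentedGroup.of (BGen.H u)
  let U : {s : A // st s = -s} → PresentedGroup R := fun u => PresentedGroup.of (BGen.U u)
  let W : PresentedGroup R := PresentedGroup.of BGen.W
  have r1 : ∀ a b, H a * H b = H (a * b) := fun a b => by
    have := rel _ (Or.inl ⟨a, b, rfl⟩)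
    simp only [map_mul, map_inv, mul_inv_eq_one] at this
    exact this
  have r2 : ∀ a b c : {s : A // st s = -s}, (c : A) = a + b → U a * U b = U c :=
    fun a b c h => by
    have := rel _ (Or.inr (Or.inl ⟨a, b, c, h, rfl⟩))
    simp only [map_mul, map_inv, mul_inv_eq_one] at this
    exact this
  have r3 : ∀ (u : Aˣ) (s s' : {s : A // st s = -s}), (s' : A) = u * s * st u →
      H u * U s = U s' * H u := fun a b c h => by
    have := rel _ (Or.inr (Or.inr (Or.inl ⟨a, b, c, h, rfl⟩)))
    rw [map_mul, map_inv, mul_inv_eq_one] at this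
    exact this
  have r4 : W * W = 1 := rel _ (Or.inr (Or.inr (Or.inr (Or.inl rfl))))
  have r5 : ∀ u : Aˣ, H u * W = W * H (Units.map (st : A →* A) u)⁻¹ := fun u => by
    have := rel _ (Or.inr (Or.inr (Or.inr (Or.inr (Or.inl ⟨u, rfl⟩)))))
    rw [map_mul, map_inv, mul_inv_eq_one] at this
    exact this
  have r6 : ∀ (u : Aˣ) (s₁ s₂ : {s : A // st s = -s}), st u = -(u : A) → (s₁ : A) = ↑u⁻¹ →
      (s₂ : A) = -u → W * U s₁ * W * U s₂ * W * U s₁ = H (-u) := fun u a b h1 h2 h3 => by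
    have := rel _ (Or.inr (Or.inr (Or.inr (Or.inr (Or.inr ⟨u, a, b, h1, h2, h3, rfl⟩)))))
    rw [map_mul, map_inv, mul_inv_eq_one] at this
    exact this
  let P : PresentedGroup R → Prop := fun g => ∃ x t y, g = U x * H t * W * U y
  obtain ⟨H1, U0, Q1, QW, QH, QU⟩ := cells st hst e he hea H U W r1 r2 r3 r4 r5 r6 P
    (fun g => P g ∨ P (W * g)) (fun _ => Iff.rfl) (fun _ => Iff.rfl)
  have Hinv : ∀ t, (H t)⁻¹ = H t⁻¹ := fun t => by
    rw [inv_eq_iff_mul_eq_one, r1, mul_inv_cancel, H1]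
  have Uinv : ∀ s, ∃ s', (U s)⁻¹ = U s' := fun s => by
    have hs : st (-(s : A)) = - -(s : A) := by rw [map_neg, s.2]
    refine ⟨⟨_, hs⟩, ?_⟩
    rw [inv_eq_iff_mul_eq_one, r2 s ⟨_, hs⟩ ⟨0, by simp⟩ (by simp)]
    exact U0 _ rfl
  have Winv : W⁻¹ = W := by rw [inv_eq_iff_mul_eq_one, r4]
  have WW : ∀ g, W * (W * g) = g := fun g => by rw [← mul_assoc, r4, one_mul]
  have act : ∀ (w : FreeGroup (BGen A st)) (g : PresentedGroup R), (P g ∨ P (W * g)) →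
      (P (PresentedGroup.mk R w * g) ∨ P (W * (PresentedGroup.mk R w * g))) := by
    intro w
    induction w using FreeGroup.induction_on with
    | C1 => intro g hg; rwa [map_one, one_mul]
    | of x =>
      intro g hg
      cases x with
      | H t => exact QH t g hg
      | U s => exact QU s g hg
      | W => exact QW g hg
    | inv_of x _ =>
      intro g hg
      rw [map_inv]
      cases x with
      | H t =>
        have := QH t⁻¹ g hg
        rw [← Hinv] at this
        exact this
      | U s =>
        obtain ⟨s', h⟩ := Uinv s
        have := QU s' g hg
        rw [← h] at this
        exact this
      | W =>
        have := QW g hg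
        have e1 : (PresentedGroup.mk R (FreeGroup.of BGen.W))⁻¹ = W := Winv
        rw [e1]
        exact this
    | mul a b ha hb =>
      intro g hg
      rw [map_mul, mul_assoc]
      exact ha _ (hb _ hg)
  have all : ∀ g : PresentedGroup R, P g ∨ P (W * g) := by
    intro g
    obtain ⟨w, rfl⟩ := PresentedGroup.mk_surjective R g
    have := act w 1 Q1
    rwa [mul_one] at this
  have φform : ∀ x t y, φ (U x * H t * W * U y) =
      uMat A x * hMat A st t * wMat A * uMat A y := fun x t y => by
    rw [map_mul, map_mul, map_mul]
    change φ (PresentedGroup.of _) * φ (PresentedGroup.of _) * φ (PresentedGroup.of _) *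
      φ (PresentedGroup.of _) = _
    rw [φH, φU, φU, φW]
  refine ⟨φ, ?_, ?_, φH, φU, φW⟩
  · rw [injective_iff_map_eq_one]
    intro g hg
    rcases all g with ⟨x, t, y, h⟩ | ⟨x, t, y, h⟩
    · exfalso
      rw [h, φform, form] at hg
      have h0 := congrFun (congrFun hg 1) 0
      have h1 : (((Units.map (st : A →* A) t)⁻¹ : Aˣ) : A) = 0 := h0
      exact Units.ne_zero _ h1
    · have hW : φ (W * g) = wMat A := by rw [map_mul, hg, mul_one]; exact φW
      rw [h, φform, form] at hW
      have h00 := congrFun (congrFun hW 0) 0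
      have h01 := congrFun (congrFun hW 0) 1
      have h10 := congrFun (congrFun hW 1) 0
      have h11 := congrFun (congrFun hW 1) 1
      simp only [wMat, Matrix.of_apply, Matrix.cons_val', Matrix.cons_val_zero,
        Matrix.cons_val_one, Matrix.cons_val_fin_one] at h00 h01 h10 h11
      rw [h10, mul_one] at h00
      rw [h10, one_mul] at h11
      rw [h00, h11, mul_zero, zero_add] at h01
      have ht : t = 1 := Units.ext h01
      rw [U0 x h00, U0 y h11, ht, H1, one_mul, one_mul, mul_one] at h
      exact mul_eq_left.mp h
  · apply Set.Subset.antisymm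
    · rintro _ ⟨g, rfl⟩
      have base : ∀ g, P g → φ g ∈ SLstarSet A st := by
        rintro g ⟨x, t, y, rfl⟩
        rw [φform]
        exact SL_mul st (SL_mul st (SL_mul st (SL_u st _ x.2) (SL_h st hst t)) (SL_w st))
          (SL_u st _ y.2)
      rcases all g with h | h
      · exact base _ h
      · rw [← WW g, map_mul]
        refine SL_mul st ?_ (base _ h)
        change φ (PresentedGroup.of _) ∈ _
        rw [φW]; exact SL_w st
    · intro g hg
      by_cases hc : IsUnit (g 1 0)
      · obtain ⟨x, y, t, h⟩ := bigcell st hst g hg hc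
        exact ⟨U x * H t * W * U y, by rw [φform, h]⟩
      · have ha : IsUnit (g 0 0) := by
          by_contra ha
          obtain ⟨-, h2, -, -⟩ := (SL_iff st g).1 hg
          have inv : ∀ z, ¬ IsUnit z → st z ∈ IsLocalRing.maximalIdeal A := by
            intro z hz hz2
            apply hz
            rw [← hst z]
            exact hz2.map st
          have : (1 : A) ∈ IsLocalRing.maximalIdeal A := by
            rw [← h2]
            exact Ideal.add_mem _ (Ideal.mul_mem_right _ _ (inv _ hc))
              (Ideal.mul_mem_right _ _ (inv _ ha))
          exact this isUnit_one
        have hw : (wMat A * g) 1 0 = g 0 0 := by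
          simp [wMat, Matrix.mul_apply, Fin.sum_univ_two]
        obtain ⟨x, y, t, h⟩ := bigcell st hst (wMat A * g) (SL_mul st (SL_w st) hg) (by rwa [hw])
        refine ⟨W * (U x * H t * W * U y), ?_⟩
        rw [map_mul, φform, ← h]
        change φ (PresentedGroup.of _) * _ = _
        rw [φW, ← Matrix.mul_assoc]
        have : wMat A * wMat A = 1 := by simp [wMat, Matrix.one_fin_two]
        rw [this, Matrix.one_mul]

end Aux

/-- `SL_*^1(2,A_n)` is isomorphic to the group presented by the
Bruhat generators and relations, via `H t ↦ h_t`, `U s ↦ u_s`, `W ↦ w`. -/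
theorem SLstar_bruhat_presentation
    (p t q : ℕ) (hp : p.Prime) (hp2 : Odd p) (ht : 0 < t) (hq : q = p ^ t)
    (k K : Type) [Field k] [Fintype k] [Field K] [Fintype K] [Algebra k K]
    (hcardk : Fintype.card k = q) (hcardK : Fintype.card K = q ^ 2)
    (Δ : K) (hΔ : Δ ∉ Set.range (algebraMap k K))
    (hΔ2 : Δ ^ 2 ∈ Set.range (algebraMap k K))
    (σ : K →+* K) (hσk : ∀ c : k, σ (algebraMap k K c) = algebraMap k K c)
    (hσne : σ ≠ RingHom.id K) (hσΔ : σ Δ = -Δ)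
    (n : ℕ) (hn : 0 < n) :
    ∃ φ : PresentedGroup (bruhatRels (TruncPoly K n) (trStar K σ n)) →*
        Matrix (Fin 2) (Fin 2) (TruncPoly K n),
      Function.Injective φ ∧
      Set.range ⇑φ = SLstarSet (TruncPoly K n) (trStar K σ n) ∧
      (∀ u : (TruncPoly K n)ˣ,
        φ (PresentedGroup.of (BGen.H u)) = hMat (TruncPoly K n) (trStar K σ n) u) ∧
      (∀ s : {s : TruncPoly K n // trStar K σ n s = -s},
        φ (PresentedGroup.of (BGen.U s)) = uMat (TruncPoly K n) ↑s) ∧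
      φ (PresentedGroup.of BGen.W) = wMat (TruncPoly K n) := by
  have hq1 : 1 < q := by
    rw [hq]; exact Nat.one_lt_pow ht.ne' hp.one_lt
  have hσ := sigma_invol q hq1 k K hcardk hcardK Δ hΔ σ hσk hσΔ
  have := trunc_local K n hn
  have hΔ0 : Δ ≠ 0 := by
    rintro rfl
    exact hΔ ⟨0, map_zero _⟩
  exact main_general (trStar K σ n) (trStar_invol K σ hσ n) (AdjoinRoot.of (X ^ n : K[X]) Δ)
    ((IsUnit.mk0 _ hΔ0).map (AdjoinRoot.of (X ^ n : K[X]))) (by simp [trStar, hσΔ])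
end
end

section
/- For every invertible antisymmetric element t ∈ A_n, the Gauss-type sum ∑_{y ∈ A_n} γ(t,y) = ∑_{y ∈ A_n} ψ(−2^{−1} t y* y) equals (−1)^n q^n. -/
open Polynomial Matrix

noncomputable section

/-- The `i`-th coefficient of an element of `K[x]/(x^n)`. -/
def trCoeff (K : Type) [CommRing K] (n : ℕ) (a : TruncPoly K n) (i : ℕ) : K :=
  (AdjoinRoot.modByMonicHom (monic_X_pow n) a).coeff i


theorem aux_comp_coeff {K : Type} [CommRing K] (P : K[X]) (i : ℕ) :
    (P.comp (-X)).coeff i = (-1) ^ i * P.coeff i := by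
  induction P using Polynomial.induction_on' with
  | add p q hp hq => simp [hp, hq, mul_add]
  | monomial m a =>
    rw [monomial_comp, neg_pow, ← mul_assoc, coeff_mul_X_pow', coeff_monomial,
      show (C a * (-1) ^ m : K[X]) = C (a * (-1) ^ m) by simp, coeff_C]
    by_cases h : m = i
    · subst h; simp [mul_comm]
    · rw [if_neg h]
      split_ifs with h1 h2
      · omega
      · simp
      · simp

theorem aux_coeff_mk {K : Type} [Field K] {n : ℕ} (P : K[X]) {i : ℕ} (hi : i < n) :
    trCoeff K n (AdjoinRoot.mk _ P) i = P.coeff i := by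
  unfold trCoeff
  rw [AdjoinRoot.modByMonicHom_mk]
  conv_rhs => rw [← modByMonic_add_div P (X ^ n)]
  rw [coeff_add, coeff_X_pow_mul', if_neg (by omega), add_zero]

theorem aux_coeff_add {K : Type} [Field K] {n : ℕ} (a b : TruncPoly K n) (i : ℕ) :
    trCoeff K n (a + b) i = trCoeff K n a i + trCoeff K n b i := by
  simp [trCoeff]

theorem aux_star_mk {K : Type} [Field K] (σ : K →+* K) {n : ℕ} (P : K[X]) :
    trStar K σ n (AdjoinRoot.mk _ P) = AdjoinRoot.mk _ ((P.map σ).comp (-X)) := by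
  unfold trStar
  rw [AdjoinRoot.lift_mk]
  induction P using Polynomial.induction_on' with
  | add p q hp hq => simp [hp, hq, eval₂_add]
  | monomial m a => simp [eval₂_monomial, map_monomial, monomial_comp]

theorem aux_coeff_star {K : Type} [Field K] (σ : K →+* K) {n : ℕ} (a : TruncPoly K n)
    {i : ℕ} (hi : i < n) :
    trCoeff K n (trStar K σ n a) i = (-1) ^ i * σ (trCoeff K n a i) := by
  obtain ⟨P, rfl⟩ := AdjoinRoot.mk_surjective a
  rw [aux_star_mk, aux_coeff_mk _ hi, aux_coeff_mk _ hi, aux_comp_coeff, coeff_map]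

theorem aux_star_root {K : Type} [Field K] (σ : K →+* K) (n j : ℕ) :
    trStar K σ n (AdjoinRoot.root _ ^ j) = (-1) ^ j * AdjoinRoot.root _ ^ j := by
  rw [map_pow, trStar, AdjoinRoot.lift_root, neg_pow]

/-- Nonzero elements have a multiple with any top coefficient. -/
theorem aux_nondeg {K : Type} [Field K] {n : ℕ} (a : TruncPoly K n) (ha : a ≠ 0) (z : K) :
    ∃ v, trCoeff K n (a * v) (n - 1) = z := by
  obtain ⟨P, rfl⟩ := AdjoinRoot.mk_surjective a
  have hP : ¬ X ^ n ∣ P := fun h => ha (AdjoinRoot.mk_eq_zero.2 h)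
  rw [X_pow_dvd_iff] at hP
  push Not at hP
  have hex : ∃ d, P.coeff d ≠ 0 ∧ d < n := by
    obtain ⟨d, h1, h2⟩ := hP
    exact ⟨d, h2, h1⟩
  classical
  have h1 := Nat.find_spec hex
  set d := Nat.find hex with hd
  have h2 : ∀ e < d, P.coeff e = 0 := by
    intro e he
    have := Nat.find_min hex he
    by_contra h
    exact this ⟨h, by omega⟩
  refine ⟨AdjoinRoot.mk _ (C (z / P.coeff d) * X ^ (n - 1 - d)), ?_⟩
  rw [← map_mul, aux_coeff_mk _ (by omega), ← mul_assoc, coeff_mul_X_pow', if_pos (by omega),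
    coeff_mul_C, show n - 1 - (n - 1 - d) = d by omega]
  have := h1.1
  field_simp

/-- Parametrisation of the annihilator of `x^h`. -/
theorem aux_param {K : Type} [Field K] [Fintype K] {n : ℕ} [Fintype (TruncPoly K n)]
    [DecidableEq (TruncPoly K n)] (h : ℕ) (hh : h ≤ n)
    (f : TruncPoly K n → ℂ) :
    ∑ y : TruncPoly K n, (if AdjoinRoot.root _ ^ h * y = 0 then f y else 0) =
      ∑ c : Fin h → K, f (AdjoinRoot.mk _ (X ^ (n - h) * ∑ i, C (c i) * X ^ (i : ℕ))) := by
  have hco : ∀ (c : Fin h → K) (i : Fin h),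
      (∑ i, C (c i) * X ^ (i : ℕ) : K[X]).coeff i = c i := by
    intro c i
    simp [coeff_X_pow, Fin.val_inj]
  rw [← Finset.sum_filter]
  symm
  refine Finset.sum_bij (fun c _ => AdjoinRoot.mk _ (X ^ (n - h) * ∑ i, C (c i) * X ^ (i : ℕ)))
    ?_ ?_ ?_ ?_
  · intro c _
    simp only [Finset.mem_filter, Finset.mem_univ, true_and]
    rw [← AdjoinRoot.mk_X, ← map_pow, ← map_mul, AdjoinRoot.mk_eq_zero, ← mul_assoc, ← pow_add,
      show h + (n - h) = n by omega]
    exact dvd_mul_right _ _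
  · intro c _ d _ hcd
    funext i
    have hi := i.2
    have := congrArg (fun a => trCoeff K n a (i + (n - h))) hcd
    rw [aux_coeff_mk _ (by omega), aux_coeff_mk _ (by omega), coeff_X_pow_mul,
      coeff_X_pow_mul, hco, hco] at this
    exact this
  · intro y hy
    simp only [Finset.mem_filter, Finset.mem_univ, true_and] at hy
    obtain ⟨P, rfl⟩ := AdjoinRoot.mk_surjective y
    rw [← AdjoinRoot.mk_X, ← map_pow, ← map_mul, AdjoinRoot.mk_eq_zero] at hy
    refine ⟨fun i => P.coeff (i + (n - h)), Finset.mem_univ _, ?_⟩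
    refine AdjoinRoot.mk_eq_mk.2 ?_
    rw [X_pow_dvd_iff] at hy ⊢
    intro d hd
    rw [coeff_sub, coeff_X_pow_mul']
    split_ifs with h1
    · have := hco (fun i => P.coeff (i + (n - h))) ⟨d - (n - h), by omega⟩
      simp only at this
      rw [this, show d - (n - h) + (n - h) = d by omega, sub_self]
    · have := hy (d + h) (by omega)
      rw [mul_comm, coeff_mul_X_pow] at this
      rw [this, sub_zero]
  · intro c _
    rfl

theorem aux_decomp {k K : Type} [Field k] [Fintype k] [Field K] [Fintype K] [Algebra k K] {q : ℕ}
    (hcardk : Fintype.card k = q) (hcardK : Fintype.card K = q ^ 2)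
    (Δ : K) (hΔ : Δ ∉ Set.range (algebraMap k K)) (z : K) :
    ∃ a b : k, z = algebraMap k K a + Δ * algebraMap k K b := by
  have hinj : Function.Injective
      (fun x : k × k => algebraMap k K x.1 + Δ * algebraMap k K x.2) := by
    rintro ⟨a, b⟩ ⟨c, d⟩ h
    simp only at h
    by_cases hbd : b = d
    · subst hbd
      simpa using h
    · exfalso
      apply hΔ
      refine ⟨(c - a) / (b - d), ?_⟩
      have h1 : algebraMap k K b - algebraMap k K d ≠ 0 := by
        rw [sub_ne_zero]
        exact fun h => hbd ((algebraMap k K).injective h)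
      rw [map_div₀, map_sub, map_sub, div_eq_iff h1]
      linear_combination -h
  have hb := (Fintype.bijective_iff_injective_and_card _).2
    ⟨hinj, by rw [Fintype.card_prod, hcardk, hcardK, sq]⟩
  obtain ⟨⟨a, b⟩, h⟩ := hb.2 z
  exact ⟨a, b, h.symm⟩

theorem aux_norm_surj {k K : Type} [Field k] [Fintype k] [Field K] [Algebra k K]
    (h2 : (2 : k) ≠ 0)
    (Δ : K) (hΔ : Δ ∉ Set.range (algebraMap k K))
    (hΔ2 : Δ ^ 2 ∈ Set.range (algebraMap k K))
    (σ : K →+* K) (hσk : ∀ c : k, σ (algebraMap k K c) = algebraMap k K c)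
    (hσΔ : σ Δ = -Δ) (u : k) : ∃ z : K, σ z * z = algebraMap k K u := by
  obtain ⟨d, hd⟩ := hΔ2
  have hd0 : d ≠ 0 := by
    rintro rfl
    rw [map_zero] at hd
    exact hΔ ⟨0, by rw [map_zero]; exact (pow_eq_zero_iff two_ne_zero |>.1 hd.symm).symm⟩
  have hodd : Fintype.card k % 2 = 1 := by
    apply FiniteField.odd_card_of_char_ne_two
    intro hc
    apply h2
    have := ringChar.Nat.cast_ringChar (R := k)
    rw [hc] at this
    exact_mod_cast this
  obtain ⟨a, b, hab⟩ := FiniteField.exists_root_sum_quadratic (f := X ^ 2 - C u)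
    (g := C (-d) * X ^ 2) (degree_X_pow_sub_C (by norm_num) _)
    (degree_C_mul_X_pow 2 (neg_ne_zero.2 hd0)) hodd
  refine ⟨algebraMap k K a + Δ * algebraMap k K b, ?_⟩
  simp only [eval_sub, eval_pow, eval_X, eval_C, eval_mul] at hab
  have hab' := congrArg (algebraMap k K) hab
  simp only [map_add, map_sub, map_mul, map_neg, map_pow, map_zero] at hab'
  rw [map_add, map_mul, hσk, hσk, hσΔ]
  linear_combination hab' + algebraMap k K b ^ 2 * hd

theorem aux_gauss {k K : Type} [Field k] [Fintype k] [Field K] [Fintype K] [Algebra k K] {q : ℕ}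
    (hcardk : Fintype.card k = q) (hcardK : Fintype.card K = q ^ 2)
    (h2 : (2 : k) ≠ 0)
    (Δ : K) (hΔ : Δ ∉ Set.range (algebraMap k K))
    (hΔ2 : Δ ^ 2 ∈ Set.range (algebraMap k K))
    (σ : K →+* K) (hσk : ∀ c : k, σ (algebraMap k K c) = algebraMap k K c)
    (hσΔ : σ Δ = -Δ)
    (ψ₀ : AddChar K ℂ)
    (hψΔ : ∃ c : k, ψ₀ (Δ * algebraMap k K c) ≠ 1) (s : K) (hs : s ≠ 0) (hσs : σ s = -s) :
    ∑ c : K, ψ₀ (s * (σ c * c)) = -(q : ℂ) := by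
  classical
  have hΔ0 : Δ ≠ 0 := by
    rintro rfl
    exact hΔ ⟨0, map_zero _⟩
  have hK2 : (2 : K) ≠ 0 := by
    have : algebraMap k K 2 ≠ 0 := (_root_.map_ne_zero _).2 h2
    rwa [map_ofNat] at this
  have hσσ : ∀ z, σ (σ z) = z := by
    intro z
    obtain ⟨a, b, rfl⟩ := aux_decomp hcardk hcardK Δ hΔ z
    simp [hσk, hσΔ]
  set G := ∑ c : K, ψ₀ (s * (σ c * c)) with hG
  have hu : ∀ u : k, u ≠ 0 → ∑ c : K, ψ₀ (s * (σ c * c) * algebraMap k K u) = G := by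
    intro u hu0
    obtain ⟨z, hz⟩ := aux_norm_surj h2 Δ hΔ hΔ2 σ hσk hσΔ u
    have hz0 : z ≠ 0 := by
      rintro rfl
      rw [mul_zero] at hz
      exact hu0 ((algebraMap k K).injective (by rw [← hz, map_zero]))
    rw [hG, ← Equiv.sum_comp (Equiv.mulRight₀ z hz0) (fun c => ψ₀ (s * (σ c * c)))]
    refine Finset.sum_congr rfl fun c _ => ?_
    congr 1
    simp only [Equiv.mulRight₀_apply, map_mul]
    rw [← hz]
    ring
  have hA : ∑ u : k, ∑ c : K, ψ₀ (s * (σ c * c) * algebraMap k K u) =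
      (q : ℂ) ^ 2 + ((q : ℂ) - 1) * G := by
    rw [← Finset.add_sum_erase _ _ (Finset.mem_univ (0 : k)),
      Finset.sum_congr rfl (g := fun _ => G) (fun u h => hu u (Finset.ne_of_mem_erase h)),
      Finset.sum_const, Finset.card_erase_of_mem (Finset.mem_univ _), Finset.card_univ, hcardk]
    have : 1 ≤ q := by rw [← hcardk]; exact Fintype.card_pos
    simp [hcardK, this]
  have hB : ∑ u : k, ∑ c : K, ψ₀ (s * (σ c * c) * algebraMap k K u) = q := by
    rw [Finset.sum_comm, Finset.sum_eq_single (0 : K)]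
    · simp [hcardk]
    · intro c _ hc
      obtain ⟨a, r, hr⟩ := aux_decomp hcardk hcardK Δ hΔ (s * (σ c * c))
      have hsc : s * (σ c * c) ≠ 0 := by
        refine mul_ne_zero hs (mul_ne_zero ?_ hc)
        rwa [Ne, map_eq_zero]
      have hanti : σ (s * (σ c * c)) = -(s * (σ c * c)) := by
        rw [map_mul, map_mul, hσσ, hσs]; ring
      have ha : algebraMap k K a = 0 := by
        rw [hr, map_add, map_mul, hσk, hσk, hσΔ] at hanti
        have : 2 * algebraMap k K a = 0 := by linear_combination hanti
        exact (mul_eq_zero.1 this).resolve_left hK2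
      rw [ha, zero_add] at hr
      have hr0 : r ≠ 0 := by
        rintro rfl
        rw [map_zero, mul_zero] at hr
        exact hsc hr
      let χ : AddChar k ℂ := ψ₀.compAddMonoidHom
        ((AddMonoidHom.mulLeft (s * (σ c * c))).comp (algebraMap k K).toAddMonoidHom)
      have hχ : χ ≠ 0 := by
        obtain ⟨e, he⟩ := hψΔ
        intro h0
        apply he
        have := DFunLike.congr_fun h0 (r⁻¹ * e)
        simp only [χ, AddChar.compAddMonoidHom_apply, AddMonoidHom.comp_apply,
          AddMonoidHom.coe_mulLeft, AddChar.zero_apply] at this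
        rw [← this, hr]
        congr 1
        have hr1 : algebraMap k K r ≠ 0 := by simpa using hr0
        simp
        field_simp
      exact AddChar.sum_eq_zero_iff_ne_zero.2 hχ
    · simp
  have hq1 : (q : ℂ) - 1 ≠ 0 := by
    rw [sub_ne_zero]
    have : 1 < q := by rw [← hcardk]; exact Fintype.one_lt_card
    exact_mod_cast this.ne'
  apply mul_left_cancel₀ hq1
  linear_combination hB - hA

theorem aux_star_star {K : Type} [Field K] (σ : K →+* K) (hσσ : ∀ z, σ (σ z) = z) {n : ℕ}
    (a : TruncPoly K n) : trStar K σ n (trStar K σ n a) = a := by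
  obtain ⟨P, rfl⟩ := AdjoinRoot.mk_surjective a
  rw [aux_star_mk, aux_star_mk]
  congr 1
  ext i
  rw [aux_comp_coeff, coeff_map, aux_comp_coeff, coeff_map, map_mul, hσσ, ← mul_assoc]
  rw [map_pow, map_neg, map_one, ← mul_pow]
  simp

theorem aux_reduce {K : Type} [Field K] [Fintype K] (σ : K →+* K) (hσσ : ∀ z, σ (σ z) = z)
    {n : ℕ} (hn : 0 < n) [Fintype (TruncPoly K n)] [DecidableEq (TruncPoly K n)]
    (ψ₀ : AddChar K ℂ) (β : TruncPoly K n)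
    (hβ : trStar K σ n β = -β) (hβu : IsUnit β) (h : ℕ) (hh : n ≤ h + h)
    (hz : ∃ z, ψ₀ (z - (-1) ^ (n - 1) * σ z) ≠ 1) :
    ∑ y : TruncPoly K n, ψ₀ (trCoeff K n (β * trStar K σ n y * y) (n - 1)) =
    ∑ y : TruncPoly K n, (if AdjoinRoot.root _ ^ h * y = 0 then
      ψ₀ (trCoeff K n (β * trStar K σ n y * y) (n - 1)) else 0) := by
  set x : TruncPoly K n := AdjoinRoot.root (X ^ n : K[X]) with hx
  have hsx : trStar K σ n (x ^ h) = (-1) ^ h * x ^ h := aux_star_root σ n h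
  have hxn : x ^ (h + h) = 0 := by
    rw [hx, ← AdjoinRoot.mk_X, ← map_pow, AdjoinRoot.mk_eq_zero]
    exact pow_dvd_pow _ hh
  let γ : TruncPoly K n → ℂ := fun y => ψ₀ (trCoeff K n (β * trStar K σ n y * y) (n - 1))
  let lam : TruncPoly K n →+ K := AddMonoidHom.mk' (fun a => trCoeff K n a (n - 1))
    (fun a b => aux_coeff_add a b _)
  let τ : K →+ K := AddMonoidHom.id K - (AddMonoidHom.mulLeft ((-1) ^ (n - 1))).comp σ.toAddMonoidHom
  let χ : TruncPoly K n → AddChar (TruncPoly K n) ℂ := fun y => ψ₀.compAddMonoidHom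
    ((τ.comp lam).comp (AddMonoidHom.mulLeft (β * trStar K σ n y * x ^ h)))
  have hχ : ∀ y v, χ y v = ψ₀ (τ (lam (β * trStar K σ n y * x ^ h * v))) := fun _ _ => rfl
  have hτ : ∀ z, τ z = z - (-1) ^ (n - 1) * σ z := fun _ => rfl
  have hlstar : ∀ a, lam (trStar K σ n a) = (-1) ^ (n - 1) * σ (lam a) :=
    fun a => aux_coeff_star σ a (by omega)
  have hγ : ∀ y v, γ (y + x ^ h * v) = γ y * χ y v := by
    intro y v
    rw [hχ, hτ, ← hlstar]
    change ψ₀ (lam _) = ψ₀ (lam _) * _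
    rw [← AddChar.map_add_eq_mul, ← map_sub, ← map_add]
    congr 2
    simp only [map_mul, map_add, hβ, hsx, aux_star_star σ hσσ]
    have e1 : x ^ h * x ^ h = 0 := by rw [← pow_add, hxn]
    linear_combination β * (-1) ^ h * trStar K σ n v * v * e1
  have hann : ∀ y, x ^ h * y = 0 → x ^ h * trStar K σ n y = 0 := by
    intro y hy
    have := congrArg (trStar K σ n) hy
    rw [map_mul, hsx, map_zero, mul_assoc] at this
    have h1 : ((-1 : TruncPoly K n) ^ h) * (-1) ^ h = 1 := by rw [← mul_pow]; simp
    calc x ^ h * trStar K σ n y = (-1) ^ h * ((-1) ^ h * (x ^ h * trStar K σ n y)) := by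
          rw [← mul_assoc, h1, one_mul]
      _ = 0 := by rw [this, mul_zero]
  have hsum : ∀ y, ∑ v, χ y v = if x ^ h * y = 0 then (Fintype.card (TruncPoly K n) : ℂ) else 0 := by
    intro y
    split_ifs with hy
    · have : ∀ v, χ y v = 1 := by
        intro v
        rw [hχ, show β * trStar K σ n y * x ^ h * v = β * v * (x ^ h * trStar K σ n y) by ring,
          hann y hy, mul_zero, map_zero, map_zero, AddChar.map_zero_eq_one]
      simp [this]
    · rw [AddChar.sum_eq_zero_iff_ne_zero]
      intro h0
      obtain ⟨z, hz⟩ := hz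
      have hne : β * trStar K σ n y * x ^ h ≠ 0 := by
        intro h1
        rw [mul_assoc, hβu.mul_right_eq_zero, mul_comm] at h1
        have := hann _ h1
        rw [aux_star_star σ hσσ] at this
        exact hy this
      obtain ⟨v, hv⟩ := aux_nondeg _ hne z
      apply hz
      have := DFunLike.congr_fun h0 v
      rw [hχ, hτ, AddChar.zero_apply, show lam _ = z from hv] at this
      exact this
  have hcard : (Fintype.card (TruncPoly K n) : ℂ) ≠ 0 := by
    exact_mod_cast (Fintype.card_pos_iff.2 ⟨0⟩).ne'
  apply mul_left_cancel₀ hcard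
  change _ * ∑ y, γ y = _ * ∑ y, (if x ^ h * y = 0 then γ y else 0)
  calc (Fintype.card (TruncPoly K n) : ℂ) * ∑ y, γ y = ∑ v : TruncPoly K n, ∑ y, γ y := by simp
    _ = ∑ v : TruncPoly K n, ∑ y, γ (y + x ^ h * v) :=
        Finset.sum_congr rfl fun v _ => (Equiv.sum_comp (Equiv.addRight (x ^ h * v)) γ).symm
    _ = ∑ y, ∑ v, γ y * χ y v := by
        rw [Finset.sum_comm]; simp only [hγ]
    _ = _ := by
        rw [Finset.mul_sum]
        refine Finset.sum_congr rfl fun y _ => ?_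
        rw [← Finset.mul_sum, hsum]
        split_ifs <;> simp [mul_comm]

theorem aux_gamma {K : Type} [Field K] (σ : K →+* K) {n : ℕ} (m : ℕ) (B Q : K[X]) :
    AdjoinRoot.mk (X ^ n) B * trStar K σ n (AdjoinRoot.mk _ (X ^ m * Q)) *
      AdjoinRoot.mk _ (X ^ m * Q) =
    AdjoinRoot.mk _ (X ^ (m + m) * ((-1) ^ m * B * ((Q.map σ).comp (-X)) * Q)) := by
  rw [aux_star_mk, ← map_mul, ← map_mul]
  congr 1
  rw [Polynomial.map_mul, mul_comp, Polynomial.map_pow, map_X, X_pow_comp, neg_pow]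
  ring

/-- for every invertible antisymmetric `t ∈ A_n`, the Gauss-type
sum `∑_{y ∈ A_n} ψ(−2⁻¹·t·y*·y)` equals `(−1)ⁿ·qⁿ`. -/
theorem gauss_sum_truncPoly
    (p t q : ℕ) (hp : p.Prime) (hp2 : Odd p) (ht : 0 < t) (hq : q = p ^ t)
    (k K : Type) [Field k] [Fintype k] [Field K] [Fintype K] [Algebra k K]
    (hcardk : Fintype.card k = q) (hcardK : Fintype.card K = q ^ 2)
    (Δ : K) (hΔ : Δ ∉ Set.range (algebraMap k K))
    (hΔ2 : Δ ^ 2 ∈ Set.range (algebraMap k K))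
    (σ : K →+* K) (hσk : ∀ c : k, σ (algebraMap k K c) = algebraMap k K c)
    (hσne : σ ≠ RingHom.id K) (hσΔ : σ Δ = -Δ)
    (n : ℕ) (hn : 0 < n) [Fintype (TruncPoly K n)]
    (ψ₀ : AddChar K ℂ)
    (hψk : ∃ c : k, ψ₀ (algebraMap k K c) ≠ 1)
    (hψΔ : ∃ c : k, ψ₀ (Δ * algebraMap k K c) ≠ 1)
    (b : TruncPoly K n) (hb : trStar K σ n b = -b) (hbu : IsUnit b) :
    ∑ y : TruncPoly K n,
        ψ₀ (trCoeff K n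
          (-(AdjoinRoot.of (X ^ n : K[X]) (2⁻¹ : K)) * b * trStar K σ n y * y) (n - 1)) =
      (-1) ^ n * (q : ℂ) ^ n := by
  classical
  have h2 : (2 : k) ≠ 0 := by
    intro h
    have hc : ringChar k ∣ 2 := ringChar.dvd (by exact_mod_cast h)
    have h1 : ringChar k ≠ 1 := CharP.ringChar_ne_one
    have h3 : ringChar k = 2 := (Nat.dvd_prime Nat.prime_two).1 hc |>.resolve_left h1
    have h4 := FiniteField.even_card_iff_char_two.1 h3
    rw [hcardk, hq] at h4
    have := hp2.pow (n := t)
    rw [Nat.odd_iff] at this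
    omega
  have hK2 : (2 : K) ≠ 0 := by
    have : algebraMap k K 2 ≠ 0 := (_root_.map_ne_zero _).2 h2
    rwa [map_ofNat] at this
  have hσσ : ∀ z, σ (σ z) = z := by
    intro z
    obtain ⟨a, b, rfl⟩ := aux_decomp hcardk hcardK Δ hΔ z
    simp [hσk, hσΔ]
  have hz : ∃ z, ψ₀ (z - (-1) ^ (n - 1) * σ z) ≠ 1 := by
    rcases neg_one_pow_eq_or K (n - 1) with h | h
    · obtain ⟨c, hc⟩ := hψΔ
      refine ⟨2⁻¹ * (Δ * algebraMap k K c), ?_⟩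
      rw [h]
      convert hc using 2
      simp only [map_mul, map_inv₀, map_ofNat, hσk, hσΔ]
      field_simp
      ring
    · obtain ⟨c, hc⟩ := hψk
      refine ⟨2⁻¹ * (algebraMap k K c), ?_⟩
      rw [h]
      convert hc using 2
      simp only [map_mul, map_inv₀, map_ofNat, hσk, hσΔ]
      field_simp
      ring
  obtain ⟨β, hβd⟩ : ∃ β, β = -(AdjoinRoot.of (X ^ n : K[X]) (2⁻¹ : K)) * b := ⟨_, rfl⟩
  have hβ : trStar K σ n β = -β := by
    rw [hβd, map_mul, hb, map_neg]
    have : trStar K σ n (AdjoinRoot.of (X ^ n : K[X]) (2⁻¹ : K)) = AdjoinRoot.of _ (2⁻¹ : K) := by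
      rw [trStar, AdjoinRoot.lift_of, RingHom.comp_apply, map_inv₀ σ, map_ofNat σ]
    rw [this]
    ring
  have hβu : IsUnit β := by
    rw [hβd]
    exact (((isUnit_iff_ne_zero.2 (inv_ne_zero hK2)).map (AdjoinRoot.of (X ^ n : K[X]))).neg).mul hbu
  rw [← hβd]
  obtain ⟨m, hm⟩ := Nat.even_or_odd' n
  rw [aux_reduce σ hσσ hn ψ₀ β hβ hβu (n - m) (by omega) hz,
    aux_param (n - m) (by omega) (fun y => ψ₀ (trCoeff K n (β * trStar K σ n y * y) (n - 1)))]
  obtain ⟨B, rfl⟩ := AdjoinRoot.mk_surjective β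
  have hnm : n - (n - m) = m := by omega
  simp only [hnm, aux_gamma]
  rcases hm with hm | hm
  · have h0 : ∀ P : K[X], AdjoinRoot.mk (X ^ n) (X ^ (m + m) * P) = 0 := by
      intro P
      rw [AdjoinRoot.mk_eq_zero, hm, two_mul]
      exact dvd_mul_right _ _
    simp only [h0]
    have h1 : trCoeff K n 0 (n - 1) = 0 := by simp [trCoeff]
    simp only [h1, AddChar.map_zero_eq_one]
    rw [Finset.sum_const, Finset.card_univ, Fintype.card_fun, hcardK, Fintype.card_fin,
      show n - m = m by omega, hm, pow_mul (-1 : ℂ)]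
    simp [pow_mul]
  · have hB0 : B.coeff 0 ≠ 0 := by
      obtain ⟨v, hv⟩ := hβu.exists_right_inv
      obtain ⟨V, rfl⟩ := AdjoinRoot.mk_surjective v
      rw [← map_mul, ← map_one (AdjoinRoot.mk _)] at hv
      have := congrArg (fun a => trCoeff K n a 0) hv
      rw [aux_coeff_mk _ hn, aux_coeff_mk _ hn, mul_coeff_zero] at this
      intro h
      simp [h] at this
    have hBσ : σ (B.coeff 0) = -B.coeff 0 := by
      rw [aux_star_mk, ← map_neg] at hβ
      have := congrArg (fun a => trCoeff K n a 0) hβ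
      rw [aux_coeff_mk _ hn, aux_coeff_mk _ hn, aux_comp_coeff] at this
      simpa using this
    have hnm' : n - m = m + 1 := by omega
    rw [hnm']
    have hval : ∀ c : Fin (m + 1) → K, trCoeff K n (AdjoinRoot.mk _ (X ^ (m + m) * ((-1) ^ m * B *
        (((∑ i, C (c i) * X ^ (i : ℕ) : K[X]).map σ).comp (-X)) *
          ∑ i, C (c i) * X ^ (i : ℕ)))) (n - 1) =
        (-1) ^ m * B.coeff 0 * (σ (c 0) * c 0) := by
      intro c
      have hc0 : (∑ i, C (c i) * X ^ (i : ℕ) : K[X]).coeff 0 = c 0 := by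
        rw [Fin.sum_univ_succ]
        simp [coeff_X_pow]
      rw [aux_coeff_mk _ (by omega), coeff_X_pow_mul', if_pos (by omega),
        show n - 1 - (m + m) = 0 by omega, mul_coeff_zero, mul_coeff_zero, mul_coeff_zero,
        aux_comp_coeff, coeff_map, hc0]
      have : ((-1 : K[X]) ^ m).coeff 0 = (-1) ^ m := by
        rw [show (-1 : K[X]) ^ m = C ((-1) ^ m) by simp, coeff_C_zero]
      rw [this]
      ring
    simp only [hval]
    rw [← Equiv.sum_comp (Fin.consEquiv (fun _ : Fin (m + 1) => K)), Fintype.sum_prod_type]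
    simp only [Fin.consEquiv_apply, Fin.cons_zero, Finset.sum_const, Finset.card_univ,
      Fintype.card_fun, hcardK, Fintype.card_fin, nsmul_eq_mul]
    rw [← Finset.mul_sum, aux_gauss hcardk hcardK h2 Δ hΔ hΔ2 σ hσk hσΔ ψ₀ hψΔ
      ((-1) ^ m * B.coeff 0) (mul_ne_zero (pow_ne_zero _ (by simp)) hB0)
      (by rw [map_mul, hBσ]; simp), hm, pow_succ (-1 : ℂ), pow_mul (-1 : ℂ)]
    push_cast
    rw [← pow_mul]
    ring
end
end

section
/- The group A_n^× acts transitively on the set of invertible symmetric elements of A_n via a·t = a t a*; equivalently, every invertible symmetric element t ∈ A_n^sym ∩ A_n^× can be written as t = a a* for some a ∈ A_n^×. -/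
open Polynomial Matrix

noncomputable section

theorem aux_norm (k K : Type) [Field k] [Fintype k] [Field K] [Fintype K] [Algebra k K]
    (q : ℕ) (hodd : Odd q)
    (hcardk : Fintype.card k = q) (hcardK : Fintype.card K = q ^ 2)
    (h2 : (2 : K) ≠ 0)
    (Δ : K) (hΔ : Δ ∉ Set.range (algebraMap k K))
    (hΔ2 : Δ ^ 2 ∈ Set.range (algebraMap k K))
    (σ : K →+* K) (hσk : ∀ c : k, σ (algebraMap k K c) = algebraMap k K c)
    (hσΔ : σ Δ = -Δ) (c : K) (hc : σ c = c) : ∃ z : K, c = z * σ z := by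
  obtain ⟨d, hd⟩ := hΔ2
  have hinj : Function.Injective
      (fun x : k × k => algebraMap k K x.1 + algebraMap k K x.2 * Δ) := by
    rintro ⟨a, b⟩ ⟨a', b'⟩ h
    simp only at h
    by_cases hb : b = b'
    · subst hb
      have := (algebraMap k K).injective (add_right_cancel h)
      rw [this]
    · exfalso
      apply hΔ
      have hb' : algebraMap k K (b - b') ≠ 0 := by
        rw [_root_.map_ne_zero]
        exact sub_ne_zero.mpr hb
      refine ⟨(a' - a) / (b - b'), ?_⟩
      rw [map_div₀, div_eq_iff hb']
      simp only [map_sub]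
      linear_combination -h
  have hbij := (Fintype.bijective_iff_injective_and_card _).2 ⟨hinj, by
    rw [Fintype.card_prod, hcardk, hcardK, sq]⟩
  obtain ⟨⟨a, b⟩, hab⟩ := hbij.2 c
  simp only at hab
  have hΔ0 : Δ ≠ 0 := by
    rintro rfl
    exact hΔ ⟨0, map_zero _⟩
  have hb : algebraMap k K b = 0 := by
    rw [← hab] at hc
    simp only [map_add, map_mul, hσk, hσΔ] at hc
    have h3 : (2 * Δ) * algebraMap k K b = 0 := by linear_combination -hc
    exact (mul_eq_zero.1 h3).resolve_left (mul_ne_zero h2 hΔ0)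
  rw [hb, zero_mul, add_zero] at hab
  have hd0 : d ≠ 0 := by
    rintro rfl
    rw [map_zero] at hd
    exact hΔ0 (pow_eq_zero_iff (two_ne_zero) |>.1 hd.symm)
  obtain ⟨u, v, huv⟩ := FiniteField.exists_root_sum_quadratic
    (f := X ^ 2 - C a) (g := C (-d) * X ^ 2)
    (degree_X_pow_sub_C (by norm_num) a) (degree_C_mul_X_pow 2 (neg_ne_zero.2 hd0))
    (by rw [hcardk]; exact Nat.odd_iff.1 hodd)
  simp only [eval_sub, eval_pow, eval_X, eval_C, eval_mul] at huv
  refine ⟨algebraMap k K u + algebraMap k K v * Δ, ?_⟩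
  simp only [map_add, map_mul, hσk, hσΔ]
  have h5 := congrArg (algebraMap k K) huv
  simp only [map_add, map_sub, map_mul, map_pow, map_neg, map_zero] at h5
  rw [← hab]
  linear_combination -h5 - (algebraMap k K v) ^ 2 * hd

theorem aux_second
    (p t q : ℕ) (hp : p.Prime) (hp2 : Odd p) (ht : 0 < t) (hq : q = p ^ t)
    (k K : Type) [Field k] [Fintype k] [Field K] [Fintype K] [Algebra k K]
    (hcardk : Fintype.card k = q) (hcardK : Fintype.card K = q ^ 2)
    (Δ : K) (hΔ : Δ ∉ Set.range (algebraMap k K))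
    (hΔ2 : Δ ^ 2 ∈ Set.range (algebraMap k K))
    (σ : K →+* K) (hσk : ∀ c : k, σ (algebraMap k K c) = algebraMap k K c)
    (hσΔ : σ Δ = -Δ)
    (n : ℕ) (hn : 0 < n) (t₀ : TruncPoly K n) (hs : trStar K σ n t₀ = t₀) (hu : IsUnit t₀) :
        ∃ a : TruncPoly K n, IsUnit a ∧ t₀ = a * trStar K σ n a := by
  have : Fact p.Prime := ⟨hp⟩
  have hchar : CharP K p := by
    apply charP_of_card_eq_prime_pow (f := t * 2)
    rw [hcardK, hq, pow_mul]
  have h2 : (2 : K) ≠ 0 := by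
    intro h
    have : p ∣ 2 := (CharP.cast_eq_zero_iff K p 2).1 (by exact_mod_cast h)
    have h3 := (Nat.prime_dvd_prime_iff_eq hp Nat.prime_two).1 this
    rw [h3] at hp2
    exact absurd hp2 (by decide)
  have hroot : (AdjoinRoot.root (X ^ n : K[X])) ^ n = 0 := by
    rw [← AdjoinRoot.mk_X, ← map_pow, AdjoinRoot.mk_self]
  let ε : TruncPoly K n →+* K := AdjoinRoot.lift (RingHom.id K) 0 (by simp [hn.ne'])
  have hε : ∀ x, ε (trStar K σ n x) = σ (ε x) := by
    intro x
    have : ε.comp (trStar K σ n) = σ.comp ε := by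
      apply Ideal.Quotient.ringHom_ext
      apply Polynomial.ringHom_ext
      · intro a
        change ε (trStar K σ n (AdjoinRoot.of _ a)) = σ (ε (AdjoinRoot.of _ a))
        simp [ε, trStar]
      · change ε (trStar K σ n (AdjoinRoot.root _)) = σ (ε (AdjoinRoot.root _))
        simp [ε, trStar]
    exact congrArg (fun f => f x) this
  have hof : ∀ z : K, trStar K σ n (AdjoinRoot.of _ z) = AdjoinRoot.of _ (σ z) := by
    intro z
    simp [trStar]
  have hεof : ∀ z : K, ε (AdjoinRoot.of _ z) = z := by
    intro z
    simp [ε]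
  have hker : ∀ x, ε x = 0 → ∃ y, x = AdjoinRoot.root _ * y := by
    intro x hx
    obtain ⟨f, rfl⟩ := AdjoinRoot.mk_surjective x
    have hf : f.coeff 0 = 0 := by
      simpa [ε, AdjoinRoot.lift_mk, ← coeff_zero_eq_eval_zero, ← Polynomial.eval₂_id] using hx
    refine ⟨AdjoinRoot.mk _ f.divX, ?_⟩
    rw [← AdjoinRoot.mk_X, ← map_mul]
    congr 1
    conv_lhs => rw [← divX_mul_X_add f, hf]
    simp [mul_comm]
  have hnt : Nontrivial (TruncPoly K n) := ε.domain_nontrivial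
  have : CharP (TruncPoly K n) p :=
    charP_of_injective_ringHom (AdjoinRoot.of (X ^ n : K[X])).injective p
  set c := ε t₀ with hcdef
  have hc0 : c ≠ 0 := (hu.map ε).ne_zero
  have hcσ : σ c = c := by rw [hcdef, ← hε, hs]
  obtain ⟨z, hz⟩ := aux_norm k K q (hq ▸ hp2.pow) hcardk hcardK h2 Δ hΔ hΔ2 σ hσk hσΔ c hcσ
  set v := AdjoinRoot.of (X ^ n : K[X]) c⁻¹ * t₀ with hv
  have hvs : trStar K σ n v = v := by
    rw [hv, map_mul, hof, hs, map_inv₀, hcσ]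
  have htv : t₀ = AdjoinRoot.of (X ^ n : K[X]) c * v := by
    rw [hv, ← mul_assoc, ← map_mul, mul_inv_cancel₀ hc0, map_one, one_mul]
  obtain ⟨y, hy⟩ := hker (v - 1) (by
    rw [map_sub, map_one, hv, map_mul, hεof, ← hcdef, inv_mul_cancel₀ hc0, sub_self])
  have hvp : v ^ p ^ n = 1 := by
    have h1 : (v - 1) ^ p ^ n = 0 := by
      rw [hy, mul_pow, pow_eq_zero_of_le (Nat.lt_pow_self hp.one_lt).le hroot, zero_mul]
    rw [sub_pow_char_pow, one_pow] at h1
    exact sub_eq_zero.1 h1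
  obtain ⟨m, hm⟩ : Odd (p ^ n) := hp2.pow
  have hsq : v ^ (m + 1) * v ^ (m + 1) = v := by
    rw [← pow_add, show m + 1 + (m + 1) = p ^ n + 1 by omega, pow_succ, hvp, one_mul]
  have key : t₀ = (AdjoinRoot.of _ z * v ^ (m + 1)) *
      trStar K σ n (AdjoinRoot.of _ z * v ^ (m + 1)) := by
    rw [map_mul, map_pow, hvs, hof, mul_mul_mul_comm, hsq, ← map_mul, ← hz]
    exact htv
  exact ⟨_, isUnit_of_mul_isUnit_left (key ▸ hu), key⟩

/-- `A_nˣ` acts transitively on invertible symmetric elements via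
`a·t = a t a*`; equivalently every invertible symmetric `t` is of the form `a a*`. -/
theorem transitive_on_sym_units
    (p t q : ℕ) (hp : p.Prime) (hp2 : Odd p) (ht : 0 < t) (hq : q = p ^ t)
    (k K : Type) [Field k] [Fintype k] [Field K] [Fintype K] [Algebra k K]
    (hcardk : Fintype.card k = q) (hcardK : Fintype.card K = q ^ 2)
    (Δ : K) (hΔ : Δ ∉ Set.range (algebraMap k K))
    (hΔ2 : Δ ^ 2 ∈ Set.range (algebraMap k K))
    (σ : K →+* K) (hσk : ∀ c : k, σ (algebraMap k K c) = algebraMap k K c)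
    (hσne : σ ≠ RingHom.id K) (hσΔ : σ Δ = -Δ)
    (n : ℕ) (hn : 0 < n) :
    (∀ t₁ t₂ : TruncPoly K n,
        trStar K σ n t₁ = t₁ → IsUnit t₁ → trStar K σ n t₂ = t₂ → IsUnit t₂ →
        ∃ a : TruncPoly K n, IsUnit a ∧ t₂ = a * t₁ * trStar K σ n a) ∧
    (∀ t₀ : TruncPoly K n, trStar K σ n t₀ = t₀ → IsUnit t₀ →
        ∃ a : TruncPoly K n, IsUnit a ∧ t₀ = a * trStar K σ n a) := by
  have H := aux_second p t q hp hp2 ht hq k K hcardk hcardK Δ hΔ hΔ2 σ hσk hσΔ n hn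
  refine ⟨?_, H⟩
  intro t₁ t₂ h1 u1 h2 u2
  obtain ⟨a, ua, ha⟩ := H t₁ h1 u1
  obtain ⟨b, ub, hb⟩ := H t₂ h2 u2
  obtain ⟨a', haa⟩ := ua.exists_right_inv
  have hs : trStar K σ n a * trStar K σ n a' = 1 := by rw [← map_mul, haa, map_one]
  refine ⟨b * a', ub.mul (IsUnit.of_mul_eq_one a (by rw [mul_comm]; exact haa)), ?_⟩
  rw [hb, ha, map_mul]
  calc b * trStar K σ n b = b * trStar K σ n b * (a * a') * (trStar K σ n a * trStar K σ n a') := by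
        rw [haa, hs, mul_one, mul_one]
    _ = _ := by ring
end
end

section
/- The subgroup {a ∈ A_n : a a* = 1} of A_n^× has exactly (q+1)·q^{n−1} elements. -/
open Polynomial Matrix

noncomputable section

theorem aux_card_unitary {A K : Type} [CommRing A] [Field K] (ι : K →+* A) (ε : A →+* K)
    (σ : K →+* K) (st : A →+* A) (hει : ∀ z, ε (ι z) = z) (hstι : ∀ z, st (ι z) = ι (σ z))
    (hεst : ∀ a, ε (st a) = σ (ε a)) (hu : ∀ a, ε a ≠ 0 → IsUnit a) (h2 : (2 : K) ≠ 0) :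
    Nat.card {a : A | a * st a = 1} =
      Nat.card {z : K | z * σ z = 1} * Nat.card {s : A | ε s = 0 ∧ st s = -s} := by
  have hinv : ∀ a, ∃ b, ε a ≠ 0 → a * b = 1 := by
    intro a
    by_cases h : ε a = 0
    · exact ⟨0, fun h' => absurd h h'⟩
    · obtain ⟨b, hb⟩ := (hu a h).exists_right_inv
      exact ⟨b, fun _ => hb⟩
  choose i hi using hinv
  have h2A : ∀ a : A, 2 * a = 0 → a = 0 := by
    intro a ha
    have hU : IsUnit (2 : A) := hu 2 (by rw [map_ofNat ε 2]; exact h2)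
    exact (hU.mul_right_eq_zero).1 ha
  rw [← Nat.card_prod]
  symm
  have hS : ∀ s, ε s = 0 → (1 + s) * i (1 + s) = 1 := fun s hs => hi _ (by simp [hs])
  have hSt : ∀ s, ε s = 0 → st s = -s → (1 - s) * st (i (1 + s)) = 1 := by
    intro s hs hs'
    have := congrArg st (hS s hs)
    rw [map_mul, map_add, map_one, hs'] at this
    linear_combination this
  have hεi : ∀ s, ε s = 0 → ε (i (1 + s)) = 1 := by
    intro s hs
    have := congrArg ε (hS s hs)
    rw [map_mul, map_add, map_one, hs] at this
    simpa using this
  refine Nat.card_congr (Equiv.ofBijective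
    (fun w => ⟨ι w.1.1 * (1 - w.2.1) * i (1 + w.2.1), ?_⟩) ⟨?_, ?_⟩)
  · obtain ⟨⟨z, hz⟩, ⟨s, hs, hs'⟩⟩ := w
    simp only [Set.mem_ofPred_eq] at hz ⊢
    have e1 := hS s hs
    have e2 := hSt s hs hs'
    have e3 : ι z * ι (σ z) = 1 := by rw [← map_mul, hz, map_one]
    rw [map_mul, map_mul, map_sub, map_one, hs', hstι]
    calc _ = (ι z * ι (σ z)) * ((1 + s) * i (1 + s)) * ((1 - s) * st (i (1 + s))) := by ring
      _ = 1 := by rw [e1, e2, e3]; ring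
  · rintro ⟨⟨z, hz⟩, ⟨s, hs, hs'⟩⟩ ⟨⟨y, hy⟩, ⟨r, hr, hr'⟩⟩ h
    simp only [Set.mem_ofPred_eq] at hz hy
    simp only [Subtype.mk.injEq] at h
    have hzy : z = y := by
      have := congrArg ε h
      simpa [hει, hs, hr, hεi s hs, hεi r hr] using this
    subst hzy
    have e3 : ι z * ι (σ z) = 1 := by rw [← map_mul, hz, map_one]
    have e1 := hS s hs
    have e2 := hS r hr
    have : 2 * (s - r) = 0 := by
      linear_combination (-(ι (σ z)) * (1 + s) * (1 + r)) * h
        + (ι (σ z) * ι z * (1 - s) * (1 + r)) * e1 - (ι (σ z) * ι z * (1 - r) * (1 + s)) * e2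
        - (2 * (s - r)) * e3
    have := sub_eq_zero.1 (h2A _ this)
    subst this
    rfl
  · rintro ⟨a, ha⟩
    simp only [Set.mem_ofPred_eq] at ha
    have hz : ε a * σ (ε a) = 1 := by rw [← hεst, ← map_mul, ha, map_one]
    set z := ε a with hzdef
    have e3 : ι z * ι (σ z) = 1 := by rw [← map_mul, hz, map_one]
    obtain ⟨b, hb⟩ : ∃ b, b = ι (σ z) * a := ⟨_, rfl⟩
    have hab : a = ι z * b := by rw [hb]; linear_combination (-a) * e3
    have hεb : ε b = 1 := by rw [hb, map_mul, hει, ← hzdef]; linear_combination hz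
    have hc : (1 + b) * i (1 + b) = 1 := hi _ (by
      rw [map_add, map_one, hεb]; intro h; apply h2; rw [← h]; norm_num)
    have hbb : b * st b = 1 := by
      have e4 : st (ι z) = ι (σ z) := hstι z
      rw [hab, map_mul, e4] at ha
      linear_combination ha - b * st b * e3
    have hc' : (1 + st b) * st (i (1 + b)) = 1 := by
      have := congrArg st hc
      rwa [map_mul, map_add, map_one] at this
    have hs : ε ((1 - b) * i (1 + b)) = 0 := by simp [hεb]
    have hb' : i (1 + b) * b = st (i (1 + b)) := by
      linear_combination (-(i (1 + b) * b)) * hc' + st (i (1 + b)) * hc + (i (1 + b) * st (i (1 + b))) * hbb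
    refine ⟨⟨⟨z, hz⟩, ⟨(1 - b) * i (1 + b), hs, ?_⟩⟩, ?_⟩
    · rw [map_mul, map_sub, map_one, ← hb']
      linear_combination (-(i (1 + b))) * hbb
    · apply Subtype.ext
      simp only
      have e5 := hS _ hs
      have e6 : 2 * i (1 + b) * i (1 + (1 - b) * i (1 + b)) = 1 := by
        linear_combination e5 + (i (1 + (1 - b) * i (1 + b))) * hc
      rw [hab]
      linear_combination (ι z * b) * e6 - ι z * i (1 + (1 - b) * i (1 + b)) * hc

theorem aux_card_skew {A K : Type} [CommRing A] [Field K] (ι : K →+* A) (ε : A →+* K)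
    (σ : K →+* K) (st : A →+* A) (hει : ∀ z, ε (ι z) = z) (hstι : ∀ z, st (ι z) = ι (σ z))
    (hεst : ∀ a, ε (st a) = σ (ε a)) (hst2 : ∀ a, st (st a) = a) (h2 : (2 : K) ≠ 0)
    (Δ : K) (hΔ : Δ ≠ 0) (hσΔ : σ Δ = -Δ) :
    Nat.card A = Nat.card K * Nat.card {s : A | ε s = 0 ∧ st s = -s} ^ 2 := by
  have hT : ι 2⁻¹ * 2 = 1 := by
    have : ι (2⁻¹ * 2) = 1 := by rw [inv_mul_cancel₀ h2, map_one]
    rwa [map_mul, map_ofNat ι 2] at this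
  have hD : ι Δ⁻¹ * ι Δ = 1 := by rw [← map_mul, inv_mul_cancel₀ hΔ, map_one]
  have hsD : st (ι Δ) = - ι Δ := by rw [hstι, hσΔ, map_neg]
  have hsD' : st (ι Δ⁻¹) = - ι Δ⁻¹ := by rw [hstι, map_inv₀, hσΔ, inv_neg, map_neg]
  have hsT : st (ι 2⁻¹) = ι 2⁻¹ := by rw [hstι, map_inv₀, map_ofNat]
  rw [pow_two, ← Nat.card_prod, ← Nat.card_prod]
  symm
  refine Nat.card_congr (Equiv.ofBijective
    (fun w => ι w.1 + (w.2.1.1 + ι Δ * w.2.2.1)) ⟨?_, ?_⟩)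
  · rintro ⟨z, ⟨s, hs, hs'⟩, ⟨r, hr, hr'⟩⟩ ⟨y, ⟨u, hu, hu'⟩, ⟨v, hv, hv'⟩⟩ h
    simp only at h
    have hzy : z = y := by
      have := congrArg ε h
      simpa [hει, hs, hr, hu, hv] using this
    subst hzy
    have h1 := add_left_cancel h
    have h3 := congrArg st h1
    rw [map_add, map_add, map_mul, map_mul, hs', hr', hu', hv', hsD] at h3
    have e1 : s = u := by
      linear_combination ι 2⁻¹ * (h1 - h3) - (s - u) * hT
    have e2 : r = v := by
      linear_combination ι Δ⁻¹ * ι 2⁻¹ * (h1 + h3) - (r - v) * ι Δ⁻¹ * ι Δ * hT - (r - v) * hD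
    subst e1 e2
    rfl
  · intro a
    obtain ⟨m, hm⟩ : ∃ m, m = a - ι (ε a) := ⟨_, rfl⟩
    have hm0 : ε m = 0 := by rw [hm, map_sub, hει, sub_self]
    have hm1 : ε (st m) = 0 := by rw [hεst, hm0, map_zero]
    refine ⟨⟨ε a, ⟨ι 2⁻¹ * (m - st m), ?_, ?_⟩, ⟨ι Δ⁻¹ * ι 2⁻¹ * (m + st m), ?_, ?_⟩⟩, ?_⟩
    · simp [hm0, hm1]
    · rw [map_mul, map_sub, hst2, hsT]; ring
    · simp [hm0, hm1]
    · rw [map_mul, map_mul, map_add, hst2, hsT, hsD']; ring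
    · simp only
      linear_combination m * hT + ι 2⁻¹ * (m + st m) * hD + hm

theorem aux_card_norm_one {k K : Type} [Field k] [Fintype k] [Field K] [Fintype K] [Algebra k K]
    (q : ℕ) (hq1 : 1 < q)
    (hcardk : Fintype.card k = q) (hcardK : Fintype.card K = q ^ 2)
    (σ : K →+* K) (hσk : ∀ c : k, σ (algebraMap k K c) = algebraMap k K c)
    (hσne : σ ≠ RingHom.id K) :
    (∀ z, σ z = z ^ q) ∧ Nat.card {z : K | z * σ z = 1} = q + 1 := by
  have hfr : Module.finrank k K = 2 := by
    have h := Module.card_eq_pow_finrank (K := k) (V := K)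
    rw [hcardk, hcardK] at h
    exact (Nat.pow_right_injective hq1 h).symm
  have hσ : ∀ z, σ z = z ^ q := by
    let τ : K →ₐ[k] K := { σ with commutes' := hσk }
    obtain ⟨m, hm⟩ := (FiniteField.bijective_frobeniusAlgHom_pow k K).2 τ
    have hm2 : (m : ℕ) < 2 := hfr ▸ m.2
    have hz : ∀ z, σ z = (FiniteField.frobeniusAlgHom k K ^ (m : ℕ)) z := fun z => by
      change τ z = _
      rw [← hm]
    rcases (by omega : (m : ℕ) = 0 ∨ (m : ℕ) = 1) with h | h
    · exfalso
      apply hσne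
      ext z
      rw [hz, h]; simp
    · intro z
      rw [hz, h, pow_one, FiniteField.frobeniusAlgHom_apply, Fintype.card_eq_nat_card,
        ← Fintype.card_eq_nat_card, hcardk]
  refine ⟨hσ, ?_⟩
  have hc : Nat.card Kˣ = (q + 1) * (q - 1) := by
    rw [Nat.card_units, Nat.card_eq_fintype_card, hcardK]
    have := Nat.sq_sub_sq q 1
    simpa using this
  have hk := IsCyclic.card_powMonoidHom_ker Kˣ (q + 1)
  rw [hc, Nat.gcd_mul_right_left] at hk
  rw [← hk]
  symm
  refine Nat.card_congr (Equiv.ofBijective (fun w => ⟨(w.1 : K), ?_⟩) ⟨?_, ?_⟩)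
  · have := w.2
    rw [MonoidHom.mem_ker, powMonoidHom_apply] at this
    have := congrArg Units.val this
    simp only [Set.mem_ofPred_eq, hσ]
    rw [← pow_succ']
    simpa using this
  · rintro ⟨a, ha⟩ ⟨b, hb⟩ h
    simp only [Subtype.mk.injEq] at h
    exact Subtype.ext (Units.ext h)
  · rintro ⟨z, hz⟩
    simp only [Set.mem_ofPred_eq] at hz
    refine ⟨⟨Units.mkOfMulEqOne z (σ z) hz, ?_⟩, rfl⟩
    rw [MonoidHom.mem_ker, powMonoidHom_apply]
    ext
    rw [hσ, ← pow_succ'] at hz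
    simpa using hz

/-- the subgroup `{a ∈ A_n : a·a* = 1}` has `(q+1)·q^{n−1}` elements. -/
theorem card_norm_one_truncPoly
    (p t q : ℕ) (hp : p.Prime) (hp2 : Odd p) (ht : 0 < t) (hq : q = p ^ t)
    (k K : Type) [Field k] [Fintype k] [Field K] [Fintype K] [Algebra k K]
    (hcardk : Fintype.card k = q) (hcardK : Fintype.card K = q ^ 2)
    (Δ : K) (hΔ : Δ ∉ Set.range (algebraMap k K))
    (hΔ2 : Δ ^ 2 ∈ Set.range (algebraMap k K))
    (σ : K →+* K) (hσk : ∀ c : k, σ (algebraMap k K c) = algebraMap k K c)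
    (hσne : σ ≠ RingHom.id K) (hσΔ : σ Δ = -Δ)
    (n : ℕ) (hn : 0 < n) :
    Nat.card {a : TruncPoly K n | a * trStar K σ n a = 1} = (q + 1) * q ^ (n - 1) := by
  have hq1 : 1 < q := hq ▸ Nat.one_lt_pow ht.ne' hp.one_lt
  obtain ⟨hσ, hU⟩ := aux_card_norm_one q hq1 hcardk hcardK σ hσk hσne
  have hΔ0 : Δ ≠ 0 := fun h => hΔ ⟨0, by rw [h, map_zero]⟩
  have h2 : (2 : K) ≠ 0 := by
    intro h
    apply hΔ0
    by_contra _
    have hodd : Odd (Fintype.card K) := by rw [hcardK, hq]; exact (hp2.pow).pow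
    have := FiniteField.even_card_of_char_two (F := K) (by
      have : ringChar K ∣ 2 := (ringChar.spec K 2).1 (by exact_mod_cast h)
      rcases (Nat.dvd_prime Nat.prime_two).1 this with h1 | h1
      · exact absurd h1 (CharP.ringChar_ne_one)
      · exact h1)
    rw [Nat.odd_iff] at hodd
    omega
  have hσσ : ∀ z, σ (σ z) = z := by
    intro z
    rw [hσ, hσ, ← pow_mul, ← pow_two, ← hcardK, FiniteField.pow_card]
  let ι : K →+* TruncPoly K n := AdjoinRoot.of _
  let ε : TruncPoly K n →+* K := AdjoinRoot.lift (RingHom.id K) 0 (by simp [hn.ne'])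
  have hει : ∀ z, ε (ι z) = z := fun z => by simp [ε, ι]
  have hstι : ∀ z, trStar K σ n (ι z) = ι (σ z) := fun z => by simp [trStar, ι]
  have hstr : trStar K σ n (AdjoinRoot.root _) = -AdjoinRoot.root _ := by simp [trStar]
  have hεr : ε (AdjoinRoot.root _) = 0 := by simp [ε]
  have hεst : ∀ a, ε (trStar K σ n a) = σ (ε a) := by
    have : ε.comp (trStar K σ n) = σ.comp ε := by
      refine AdjoinRoot.ringHom_ext ?_ ?_
      · ext z
        change ε (trStar K σ n (ι z)) = σ (ε (ι z))
        rw [hstι, hει, hει]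
      · simp only [RingHom.comp_apply]
        rw [hstr, map_neg, hεr, map_zero, neg_zero]
    exact fun a => DFunLike.congr_fun this a
  have hst2 : ∀ a, trStar K σ n (trStar K σ n a) = a := by
    have : (trStar K σ n).comp (trStar K σ n) = RingHom.id _ := by
      refine AdjoinRoot.ringHom_ext ?_ ?_
      · ext z
        change trStar K σ n (trStar K σ n (ι z)) = ι z
        rw [hstι, hstι, hσσ]
      · simp only [RingHom.comp_apply]
        rw [hstr, map_neg, hstr, neg_neg]; rfl
    exact fun a => DFunLike.congr_fun this a
  have hnil : ∀ a, ε a = 0 → IsNilpotent a := by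
    intro a ha
    obtain ⟨f, rfl⟩ := AdjoinRoot.mk_surjective a
    have hf : f.coeff 0 = 0 := by
      simpa [ε, coeff_zero_eq_eval_zero, eval₂_eq_eval_map] using ha
    obtain ⟨g, rfl⟩ := X_dvd_iff.2 hf
    refine ⟨n, ?_⟩
    rw [← map_pow, mul_pow, map_mul, AdjoinRoot.mk_self, zero_mul]
  have hu : ∀ a, ε a ≠ 0 → IsUnit a := by
    intro a ha
    have h1 : IsNilpotent (a - ι (ε a)) := hnil _ (by rw [map_sub, hει, sub_self])
    have h3 : IsUnit (ι (ε a)) := (IsUnit.mk0 _ ha).map ι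
    have := h1.isUnit_add_left_of_commute h3 (Commute.all _ _)
    simpa using this
  have hA : Nat.card (TruncPoly K n) = (q ^ 2) ^ n := by
    have hm : (X ^ n : K[X]).Monic := monic_X_pow n
    let b := (AdjoinRoot.powerBasis' hm)
    have : Nat.card (TruncPoly K n) = Nat.card (Fin b.dim → K) :=
      Nat.card_congr b.basis.equivFun.toEquiv
    rw [this, Nat.card_fun, Nat.card_eq_fintype_card, hcardK, Nat.card_fin]
    simp [b]
  rw [aux_card_unitary ι ε σ (trStar K σ n) hει hstι hεst hu h2, hU]
  have h := aux_card_skew ι ε σ (trStar K σ n) hει hstι hεst hst2 h2 Δ hΔ0 hσΔ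
  rw [hA, Nat.card_eq_fintype_card (α := K), hcardK] at h
  obtain ⟨m, rfl⟩ : ∃ m, n = m + 1 := ⟨n - 1, by omega⟩
  congr 1
  rw [pow_succ', ← pow_mul, mul_comm 2 m, pow_mul] at h
  have h' := Nat.eq_of_mul_eq_mul_left (by positivity) h
  rw [Nat.add_sub_cancel]
  exact (Nat.pow_left_injective (n := 2) (by norm_num) h').symm
end
end

section
/- Let p be a prime and n ≥ 2 an integer not divisible by p. For each integer i with 1 ≤ i ≤ n−1 and p ∤ i, let α_i be the unique positive integer satisfying i·p^{α_i − 1} < n < i·p^{α_i}. Then ∑ α_i = n − 1, where the sum runs over all i with 1 ≤ i ≤ n−1 and gcd(i, p) = 1. -/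
theorem inj_aux (p : ℕ) (hp : p.Prime) (i j k l : ℕ) (hi : Nat.Coprime i p)
    (h : i * p ^ k = j * p ^ l) : l ≤ k := by
  by_contra hlt
  push Not at hlt
  obtain ⟨d, rfl⟩ := Nat.exists_eq_add_of_lt hlt
  have h2 : i * p ^ k = (j * p ^ d * p) * p ^ k := by rw [h]; ring
  have h3 := Nat.eq_of_mul_eq_mul_right (pow_pos hp.pos k) h2
  have h4 : p ∣ i := ⟨j * p ^ d, by rw [h3]; ring⟩
  exact (Nat.Prime.coprime_iff_not_dvd hp).1 hi.symm h4

/-- let `p` be prime and `n ≥ 2` with `p ∤ n`; for each `1 ≤ i ≤ n−1`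
coprime to `p`, let `α i` be the unique positive integer with
`i·p^(α i − 1) < n < i·p^(α i)`. Then `∑ α i = n − 1`. -/
theorem sum_alpha_eq (p n : ℕ) (hp : p.Prime) (hn : 2 ≤ n) (hpn : ¬ p ∣ n)
    (α : ℕ → ℕ)
    (hα : ∀ i, 1 ≤ i → i ≤ n - 1 → Nat.Coprime i p →
      0 < α i ∧ i * p ^ (α i - 1) < n ∧ n < i * p ^ (α i)) :
    ∑ i ∈ (Finset.Icc 1 (n - 1)).filter (fun i => Nat.Coprime i p), α i = n - 1 := by
  have h1 : ∑ i ∈ (Finset.Icc 1 (n - 1)).filter (fun i => Nat.Coprime i p), α i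
      = (((Finset.Icc 1 (n - 1)).filter (fun i => Nat.Coprime i p)).sigma
          (fun i => Finset.range (α i))).card := by
    simp [Finset.card_sigma]
  have h2 : (Finset.Icc 1 (n - 1)).card = n - 1 := by simp
  rw [h1]
  refine Eq.trans ?_ h2
  refine Finset.card_bij (fun x _ => x.1 * p ^ x.2) ?_ ?_ ?_
  · rintro ⟨i, k⟩ hx
    simp only [Finset.mem_sigma, Finset.mem_filter, Finset.mem_Icc, Finset.mem_range] at hx ⊢
    obtain ⟨⟨⟨hi1, hi2⟩, hc⟩, hk⟩ := hx
    obtain ⟨h0, ha, hb⟩ := hα i hi1 hi2 hc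
    have hle : i * p ^ k ≤ i * p ^ (α i - 1) :=
      Nat.mul_le_mul_left _ (Nat.pow_le_pow_right hp.pos (by omega))
    have hpos : 0 < i * p ^ k := Nat.mul_pos hi1 (pow_pos hp.pos k)
    omega
  · rintro ⟨i, k⟩ hx ⟨j, l⟩ hy h
    simp only [Finset.mem_sigma, Finset.mem_filter, Finset.mem_Icc, Finset.mem_range] at hx hy h
    have hkl : k = l := le_antisymm (inj_aux p hp j i l k hy.1.2 h.symm)
      (inj_aux p hp i j k l hx.1.2 h)
    subst hkl
    have := Nat.eq_of_mul_eq_mul_right (pow_pos hp.pos k) h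
    subst this
    rfl
  · intro m hm
    rw [Finset.mem_Icc] at hm
    obtain ⟨k, i, hnd, he⟩ := Nat.exists_eq_pow_mul_and_not_dvd (n := m) (by omega) p hp.ne_one
    have hc : Nat.Coprime i p := ((Nat.Prime.coprime_iff_not_dvd hp).2 hnd).symm
    have hi0 : 1 ≤ i := by
      rcases Nat.eq_zero_or_pos i with h | h
      · subst h; simp at hnd
      · exact h
    have him : i ≤ m := by rw [he]; exact Nat.le_mul_of_pos_left _ (pow_pos hp.pos k)
    obtain ⟨h0, ha, hb⟩ := hα i hi0 (by omega) hc
    refine ⟨⟨i, k⟩, ?_, by rw [he]; ring⟩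
    simp only [Finset.mem_sigma, Finset.mem_filter, Finset.mem_Icc, Finset.mem_range]
    refine ⟨⟨⟨hi0, by omega⟩, hc⟩, ?_⟩
    by_contra hk
    have hle : i * p ^ α i ≤ i * p ^ k :=
      Nat.mul_le_mul_left _ (Nat.pow_le_pow_right hp.pos (by omega))
    rw [mul_comm i (p ^ k), ← he] at hle
    omega
end
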